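/- Let φ_ε be a solution of the nonlinear eigenvalue problem (EV_ε), extended by zero to ℝⁿ \ Ω. Then the discrete gradient is uniformly bounded: ‖Δ^ε_e φ_ε(x)‖² ≤ C for all x ∈ Ω̄, with C independent of ε, where ‖Δ^ε_e φ_ε(x)‖ = (Σ_i |Δ^ε_{e_i} φ_ε(x)|²)^{1/2} and Δ^ε_{e_i} φ_ε(x) = (φ_ε(x + ε e_i) − φ_ε(x))/ε. -/

import Mathlib

open Set Filter Metric MeasureTheory Topology Asymptotics

noncomputable section

/-- Euclidean space ℝⁿ. -/
abbrev Eucl (n : ℕ) := EuclideanSpace ℝ (Fin n)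

/-- The points of the lattice `εℤⁿ`. -/
def latticePts (n : ℕ) (ε : ℝ) : Set (Eucl n) :=
  {m | ∀ i, ∃ z : ℤ, m i = ε * (z : ℝ)}

/-- The union of closed balls of radius `a` centered at the lattice points `εℤⁿ`
(the periodic holes `T_{a_ε}`). -/
def holes (n : ℕ) (ε a : ℝ) : Set (Eucl n) :=
  ⋃ m ∈ latticePts n ε, closedBall m a

/-- The Laplacian of a function on ℝⁿ (sum of its second partial derivatives). -/
def lap {n : ℕ} (u : Eucl n → ℝ) (x : Eucl n) : ℝ :=
  ∑ i, fderiv ℝ (fun y => fderiv ℝ u y (EuclideanSpace.single i 1)) x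
    (EuclideanSpace.single i 1)

/-- The harmonic capacity of a compact set, via the Dirichlet energy characterization
(which agrees with the flux of the capacitary potential through the boundary). -/
def capacity (n : ℕ) (K : Set (Eucl n)) : ℝ :=
  sInf {c | ∃ v : Eucl n → ℝ, ContDiff ℝ (⊤ : ℕ∞) v ∧ HasCompactSupport v ∧
    (∀ x ∈ K, 1 ≤ v x) ∧ c = ∫ x, ‖fderiv ℝ v x‖ ^ 2}

/-- The critical scale `a*_ε = ε^(n/(n-2))` (for `n ≥ 3`). -/
def aStar (n : ℕ) (ε : ℝ) : ℝ := ε ^ ((n : ℝ) / ((n : ℝ) - 2))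

/-- A set has smooth boundary: it is the strict sublevel set of a smooth function with
nonvanishing differential on the boundary. -/
def HasSmoothBoundary {n : ℕ} (Ω : Set (Eucl n)) : Prop :=
  ∃ f : Eucl n → ℝ, ContDiff ℝ (⊤ : ℕ∞) f ∧ Ω = {x | f x < 0} ∧
    ∀ x ∈ frontier Ω, fderiv ℝ f x ≠ 0

/-- The heat operator `H[ψ] = Δψ - ∂_t ψ` applied to a space-time function. -/
def heatOp {n : ℕ} (ψ : Eucl n → ℝ → ℝ) (x : Eucl n) (t : ℝ) : ℝ :=
  lap (fun y => ψ y t) x - deriv (fun s => ψ x s) t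

/-- `u` is a viscosity supersolution of `F[u] = 0` on `Q`: whenever a smooth test
function touches `u` from below at a point of `Q`, the operator evaluated on the test
function is `≤ 0` there. -/
def ViscSupersol {n : ℕ} (F : (Eucl n → ℝ → ℝ) → Eucl n → ℝ → ℝ)
    (Q : Set (Eucl n × ℝ)) (u : Eucl n → ℝ → ℝ) : Prop :=
  ∀ ψ : Eucl n → ℝ → ℝ, ContDiff ℝ (⊤ : ℕ∞) (fun p : Eucl n × ℝ => ψ p.1 p.2) →
    ∀ p ∈ Q, ψ p.1 p.2 = u p.1 p.2 → (∀ᶠ q in 𝓝[Q] p, ψ q.1 q.2 ≤ u q.1 q.2) →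
      F ψ p.1 p.2 ≤ 0

/-- `u` is a viscosity subsolution of `F[u] = 0` on `Q`. -/
def ViscSubsol {n : ℕ} (F : (Eucl n → ℝ → ℝ) → Eucl n → ℝ → ℝ)
    (Q : Set (Eucl n × ℝ)) (u : Eucl n → ℝ → ℝ) : Prop :=
  ∀ ψ : Eucl n → ℝ → ℝ, ContDiff ℝ (⊤ : ℕ∞) (fun p : Eucl n × ℝ => ψ p.1 p.2) →
    ∀ p ∈ Q, ψ p.1 p.2 = u p.1 p.2 → (∀ᶠ q in 𝓝[Q] p, u q.1 q.2 ≤ ψ q.1 q.2) →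
      0 ≤ F ψ p.1 p.2

/-- The highly oscillating obstacle `φ_ε = φ · χ_{T_{a_ε}}`. -/
def oscObstacle (n : ℕ) (ε a : ℝ) (φ : Eucl n → ℝ → ℝ) : Eucl n → ℝ → ℝ :=
  fun x t => (holes n ε a).indicator (fun y => φ y t) x

/-- `u` is a viscosity supersolution of the heat equation on `Q_T = Ω × (0,T]`, above the
obstacle `obst`, vanishing on the lateral boundary, with initial data `g`. -/
def IsSupersolHeatObstacle {n : ℕ} (Ω : Set (Eucl n)) (T : ℝ)
    (obst : Eucl n → ℝ → ℝ) (g : Eucl n → ℝ) (u : Eucl n → ℝ → ℝ) : Prop :=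
  ViscSupersol heatOp (Ω ×ˢ Ioc 0 T) u ∧
  (∀ x ∈ frontier Ω, ∀ t ∈ Ioc (0:ℝ) T, u x t = 0) ∧
  (∀ x ∈ Ω, ∀ t ∈ Ioc (0:ℝ) T, obst x t ≤ u x t) ∧
  (∀ x ∈ Ω, u x 0 = g x)

/-- `u` is the least viscosity supersolution of the obstacle problem. -/
def IsLeastSupersolHeatObstacle {n : ℕ} (Ω : Set (Eucl n)) (T : ℝ)
    (obst : Eucl n → ℝ → ℝ) (g : Eucl n → ℝ) (u : Eucl n → ℝ → ℝ) : Prop :=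
  IsSupersolHeatObstacle Ω T obst g u ∧
  ∀ v, IsSupersolHeatObstacle Ω T obst g v →
    ∀ x ∈ Ω, ∀ t ∈ Ioc (0:ℝ) T, u x t ≤ v x t

/-- Difference quotient of size `ε` in direction `e`. -/
def dquot {n : ℕ} (ε : ℝ) (e : Eucl n) (f : Eucl n → ℝ) (x : Eucl n) : ℝ :=
  (f (x + ε • e) - f x) / ε

/-- Norm of the discrete gradient `‖Δ^ε_e f(x)‖ = (Σ_i |Δ^ε_{e_i} f(x)|²)^{1/2}`. -/
def dgradNorm {n : ℕ} (ε : ℝ) (f : Eucl n → ℝ) (x : Eucl n) : ℝ :=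
  Real.sqrt (∑ i, (dquot ε (EuclideanSpace.single i 1) f x) ^ 2)

/-- A unit lattice direction `e ∈ ℤⁿ`, `|e| = 1`. -/
def UnitLatticeDir (n : ℕ) (e : Eucl n) : Prop :=
  e ∈ latticePts n 1 ∧ ‖e‖ = 1

/-- The `ε`-periodic corrector : `Δw = k` outside the holes of radius `a`,
`w = 1` on the holes. -/
def IsCorrector (n : ℕ) (ε a k : ℝ) (w : Eucl n → ℝ) : Prop :=
  Continuous w ∧ ContDiffOn ℝ 2 w (holes n ε a)ᶜ ∧
  (∀ x ∉ holes n ε a, lap w x = k) ∧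
  (∀ x ∈ holes n ε a, w x = 1) ∧
  (∀ m ∈ latticePts n ε, ∀ x, w (x + m) = w x)

/-- `liminf_{ε→0} inf_{x} w_ε(x)`, computed in the extended reals. -/
def liminfInf (n : ℕ) (w : ℝ → Eucl n → ℝ) : EReal :=
  Filter.liminf (fun ε => ⨅ x, ((w ε x : ℝ) : EReal)) (𝓝[>] (0:ℝ))

/-- Solution of the nonlinear eigenvalue problem (EV_ε) in the perforated domain
with holes of radius `a`, extended by zero outside `Ω_{a}`. -/
def IsEVSol (n : ℕ) (Ω : Set (Eucl n)) (ε a p : ℝ) (φ : Eucl n → ℝ) : Prop :=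
  ContinuousOn φ (closure Ω) ∧
  ContDiffOn ℝ 2 φ (Ω \ holes n ε a) ∧
  (∀ x ∈ Ω \ holes n ε a, lap φ x + φ x ^ p = 0) ∧
  (∀ x ∈ Ω \ holes n ε a, 0 < φ x) ∧
  (∀ x, x ∉ Ω \ holes n ε a → φ x = 0)

/-- Elliptic viscosity supersolution of `F[u] = 0` on `D`. -/
def ViscSupersolE {n : ℕ} (F : (Eucl n → ℝ) → Eucl n → ℝ) (D : Set (Eucl n))
    (u : Eucl n → ℝ) : Prop :=
  ∀ ψ : Eucl n → ℝ, ContDiff ℝ (⊤ : ℕ∞) ψ → ∀ x ∈ D, ψ x = u x →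
    (∀ᶠ y in 𝓝[D] x, ψ y ≤ u y) → F ψ x ≤ 0

/-- Elliptic viscosity subsolution of `F[u] = 0` on `D`. -/
def ViscSubsolE {n : ℕ} (F : (Eucl n → ℝ) → Eucl n → ℝ) (D : Set (Eucl n))
    (u : Eucl n → ℝ) : Prop :=
  ∀ ψ : Eucl n → ℝ, ContDiff ℝ (⊤ : ℕ∞) ψ → ∀ x ∈ D, ψ x = u x →
    (∀ᶠ y in 𝓝[D] x, u y ≤ ψ y) → 0 ≤ F ψ x

/-- The ε-periodic smooth cutoff `ξ` used for the initial data of (PME_ε). -/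
def PMECutoff (n : ℕ) (ε : ℝ) (ξ : Eucl n → ℝ) : Prop :=
  ContDiff ℝ (⊤ : ℕ∞) ξ ∧ (∀ x, 0 ≤ ξ x ∧ ξ x ≤ 1) ∧
  (∀ x ∈ holes n ε (aStar n ε), ξ x = 0) ∧
  (∀ x ∉ holes n ε (ε ^ (((n : ℝ) - 1) / ((n : ℝ) - 2))), ξ x = 1) ∧
  (∀ x ∈ holes n ε (ε ^ (((n : ℝ) - 1) / ((n : ℝ) - 2))) \ holes n ε (aStar n ε),
    lap ξ x = 0) ∧
  (∀ x, lap ξ x ≤ 0) ∧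
  (∀ i : Fin n, ∀ x, ξ (x + ε • EuclideanSpace.single i 1) = ξ x)

/-- The smooth initial data `g` for (PME_ε): vanishing outside `Ω` and with
nondegenerate gradient on `∂Ω`. -/
def PMEData (n : ℕ) (Ω : Set (Eucl n)) (δ₀ C : ℝ) (g : Eucl n → ℝ) : Prop :=
  ContDiff ℝ (⊤ : ℕ∞) g ∧ HasCompactSupport g ∧ tsupport g ⊆ closure Ω ∧
  ∀ x ∈ frontier Ω, δ₀ < ‖fderiv ℝ g x‖ ∧ ‖fderiv ℝ g x‖ < C

/-- `u` solves the porous medium problem (PME_ε) in the perforated domain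
`Q_{T,a*_ε} = Ω_{a*_ε} × (0,T]`, with lateral boundary value 0 and initial data `gε`. -/
def IsPMESol (n : ℕ) (Ω : Set (Eucl n)) (T ε m : ℝ) (gε : Eucl n → ℝ)
    (u : Eucl n → ℝ → ℝ) : Prop :=
  ContinuousOn (fun pr : Eucl n × ℝ => u pr.1 pr.2)
    (closure (Ω \ holes n ε (aStar n ε)) ×ˢ Icc 0 T) ∧
  (∀ x ∈ Ω \ holes n ε (aStar n ε), ∀ t ∈ Ioc (0:ℝ) T,
    lap (fun y => u y t ^ m) x - deriv (fun s => u x s) t = 0) ∧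
  (∀ x ∈ frontier (Ω \ holes n ε (aStar n ε)), ∀ t ∈ Ioc (0:ℝ) T, u x t = 0) ∧
  (∀ x ∈ Ω \ holes n ε (aStar n ε), u x 0 = gε x)

/-! Since `p < 1`, a subsolution of `-Δu = u ^ p` lies below a positive supersolution as soon as it
does on the boundary: look at a maximum of their quotient. A translate `φ(· + εe)` of a solution by
a period of the holes is again a subsolution, so it suffices to find a supersolution of the form
`ψ = (1 + Kδ) φ + δ h`, with `δ` of order `ε` and `h` bounded, which dominates the translate where
`φ` vanishes.

Let `ρ` be a defining function of `Ω`, and take `h = 1 + ρ ^ (1 / 2) + G`, where `G` is an explicit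
periodic barrier of order one on the holes, with `ε² ΔG ≤ -G` up to an error of order `ε²`. The
holes are mapped to holes by the translation and `φ` is at most a multiple of `ρ`, so the translate
is at most a multiple of `ε` wherever `φ` vanishes. As `Δφ = -φ ^ p`, the function `ψ` is a
supersolution if `φ ^ (p - 1)` is controlled by `-Δh` and `K φ ^ p`. Where `G` is small compared
with `ρ`, comparison with a power of `ρ - ΛG` gives `φ ≳ ρ ^ (1 / (1 - p))`, so that `φ ^ (p - 1)`
is at most of order `ρ⁻¹`, while `-Δρ ^ (1 / 2)` is of order `ρ ^ (-3 / 2)` near `∂Ω`. Elsewhere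
`-Δh` is at least of order `ε⁻¹`, which beats the trivial bound
`ψ ^ p ≤ (1 + Kδ) φ ^ p + (δh) ^ p`. -/

/-! ### Calculus of `lap` -/

section Laplacian

variable {n : ℕ} {u v : Eucl n → ℝ} {x : Eucl n}

/-- The partial derivative `∂ᵢu`. -/
def partialDeriv (i : Fin n) (u : Eucl n → ℝ) (x : Eucl n) : ℝ :=
  fderiv ℝ u x (EuclideanSpace.single i 1)

lemma lap_eq_sum_partialDeriv (u : Eucl n → ℝ) (x : Eucl n) :
    lap u x = ∑ i, partialDeriv i (partialDeriv i u) x := rfl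

lemma partialDeriv_eq {i : Fin n} {u' : Eucl n →L[ℝ] ℝ} (h : HasFDerivAt u u' x) :
    partialDeriv i u x = u' (EuclideanSpace.single i 1) := by
  rw [partialDeriv, h.fderiv]

lemma partialDeriv_congr {i : Fin n} (h : u =ᶠ[𝓝 x] v) :
    partialDeriv i u x = partialDeriv i v x := by
  rw [partialDeriv, h.fderiv_eq, partialDeriv]

lemma differentiableAt_partialDeriv (hu : ContDiffAt ℝ 2 u x) (i : Fin n) :
    DifferentiableAt ℝ (partialDeriv i u) x :=
  ((hu.fderiv_right (m := 1) (by norm_num)).differentiableAt (by norm_num)).clm_apply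
    (differentiableAt_const _)

lemma eventually_differentiableAt (hu : ContDiffAt ℝ 2 u x) :
    ∀ᶠ y in 𝓝 x, DifferentiableAt ℝ u y := by
  filter_upwards [hu.eventually (by simp)] with y hy using hy.differentiableAt (by norm_num)

lemma sum_sq_partialDeriv (u : Eucl n → ℝ) (x : Eucl n) :
    ∑ i, partialDeriv i u x ^ 2 = ‖fderiv ℝ u x‖ ^ 2 := by
  simp [(EuclideanSpace.basisFun (Fin n) ℝ).norm_dual, partialDeriv]

lemma lap_eq_laplacian (hu : ContDiffAt ℝ 2 u x) : lap u x = Laplacian.laplacian u x := by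
  have hd : DifferentiableAt ℝ (fderiv ℝ u) x :=
    (hu.fderiv_right (m := 1) (by norm_num)).differentiableAt (by norm_num)
  rw [InnerProductSpace.laplacian_eq_iteratedFDeriv_orthonormalBasis u
    (EuclideanSpace.basisFun (Fin n) ℝ)]
  refine Finset.sum_congr rfl fun i _ => ?_
  simp [iteratedFDeriv_two_apply, fderiv_clm_apply hd (differentiableAt_const _)]

lemma lap_add (hu : ContDiffAt ℝ 2 u x) (hv : ContDiffAt ℝ 2 v x) :
    lap (fun y => u y + v y) x = lap u x + lap v x := by
  rw [lap_eq_laplacian (hu.add hv), lap_eq_laplacian hu, lap_eq_laplacian hv]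
  exact hu.laplacian_add hv

lemma lap_sub (hu : ContDiffAt ℝ 2 u x) (hv : ContDiffAt ℝ 2 v x) :
    lap (fun y => u y - v y) x = lap u x - lap v x := by
  rw [lap_eq_laplacian (hu.sub hv), lap_eq_laplacian hu, lap_eq_laplacian hv]
  exact hu.laplacian_sub hv

lemma lap_const_mul (c : ℝ) (hu : ContDiffAt ℝ 2 u x) :
    lap (fun y => c * u y) x = c * lap u x := by
  rw [lap_eq_laplacian (contDiffAt_const.mul hu), lap_eq_laplacian hu]
  exact InnerProductSpace.laplacian_smul c hu

lemma lap_const_mul_add_const_mul (c d : ℝ) (hu : ContDiffAt ℝ 2 u x) (hv : ContDiffAt ℝ 2 v x) :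
    lap (fun y => c * u y + d * v y) x = c * lap u x + d * lap v x := by
  rw [lap_add (contDiffAt_const.mul hu) (contDiffAt_const.mul hv), lap_const_mul c hu,
    lap_const_mul d hv]

lemma lap_const (c : ℝ) (x : Eucl n) : lap (fun _ => c) x = 0 := by
  simp [lap]

lemma lap_comp_add_right (u : Eucl n → ℝ) (w x : Eucl n) :
    lap (fun y => u (y + w)) x = lap u (x + w) := by
  refine Finset.sum_congr rfl fun i _ => ?_
  simp only [fderiv_comp_add_right]
  rw [fderiv_comp_add_right (f := fun y => fderiv ℝ u y (EuclideanSpace.single i 1))]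

lemma continuous_lap (hu : ContDiff ℝ 2 u) : Continuous (lap u) := by
  have h₁ (i : Fin n) : ContDiff ℝ 1 (partialDeriv i u) :=
    (hu.fderiv_right (m := 1) (by norm_num)).clm_apply contDiff_const
  exact continuous_finsetSum _ fun i _ =>
    ((h₁ i).continuous_fderiv (by norm_num)).clm_apply continuous_const

theorem lap_comp {F F' : ℝ → ℝ} {F'' : ℝ} (hu : ContDiffAt ℝ 2 u x)
    (hF : ∀ᶠ z in 𝓝 (u x), HasDerivAt F (F' z) z) (hF' : HasDerivAt F' F'' (u x)) :
    lap (fun y => F (u y)) x = F' (u x) * lap u x + F'' * ‖fderiv ℝ u x‖ ^ 2 := by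
  simp only [← sum_sq_partialDeriv, lap_eq_sum_partialDeriv, Finset.mul_sum,
    ← Finset.sum_add_distrib]
  refine Finset.sum_congr rfl fun i _ => ?_
  have hfst : partialDeriv i (fun y => F (u y)) =ᶠ[𝓝 x] fun y => F' (u y) * partialDeriv i u y := by
    filter_upwards [eventually_differentiableAt hu, hu.continuousAt.eventually hF] with y hy hFy
    exact partialDeriv_eq (hFy.comp_hasFDerivAt y hy.hasFDerivAt)
  have hux : HasFDerivAt u (fderiv ℝ u x) x := (hu.differentiableAt (by norm_num)).hasFDerivAt
  have hsnd := (hF'.comp_hasFDerivAt x hux).mul (differentiableAt_partialDeriv hu i).hasFDerivAt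
  rw [partialDeriv_congr hfst]
  refine (partialDeriv_eq hsnd).trans ?_
  simp only [Function.comp_apply, add_apply, smul_apply, smul_eq_mul, partialDeriv]
  ring

lemma lap_rpow (hu : ContDiffAt ℝ 2 u x) (hx : 0 < u x) (q : ℝ) :
    lap (fun y => u y ^ q) x =
      q * u x ^ (q - 1) * lap u x + q * (q - 1) * u x ^ (q - 2) * ‖fderiv ℝ u x‖ ^ 2 := by
  have hF : ∀ᶠ z in 𝓝 (u x), HasDerivAt (fun z => z ^ q) (q * z ^ (q - 1)) z := by
    filter_upwards [lt_mem_nhds hx] with z hz using Real.hasDerivAt_rpow_const (.inl hz.ne')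
  have hF' := (Real.hasDerivAt_rpow_const (x := u x) (p := q - 1) (.inl hx.ne')).const_mul q
  rw [lap_comp hu hF hF', sub_sub, one_add_one_eq_two]
  ring

section Separable

variable {g g' g'' : ℝ → ℝ}

lemma partialDeriv_sum_comp_coord (hg : ∀ t, HasDerivAt g (g' t) t) (x : Eucl n) (i : Fin n) :
    partialDeriv i (fun y : Eucl n => ∑ j, g (y j)) x = g' (x i) := by
  have h := HasFDerivAt.fun_sum (u := Finset.univ) fun j _ =>
    (hg (x j)).comp_hasFDerivAt x (EuclideanSpace.proj j : Eucl n →L[ℝ] ℝ).hasFDerivAt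
  refine (partialDeriv_eq h).trans ?_
  simp

lemma lap_sum_comp_coord (hg : ∀ t, HasDerivAt g (g' t) t) (hg' : ∀ t, HasDerivAt g' (g'' t) t)
    (x : Eucl n) : lap (fun y : Eucl n => ∑ i, g (y i)) x = ∑ i, g'' (x i) := by
  refine Finset.sum_congr rfl fun i _ => ?_
  have h := (hg' (x i)).comp_hasFDerivAt x (EuclideanSpace.proj i : Eucl n →L[ℝ] ℝ).hasFDerivAt
  change partialDeriv i (partialDeriv i _) x = _
  rw [funext fun y => partialDeriv_sum_comp_coord hg y i]
  refine (partialDeriv_eq h).trans ?_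
  simp

end Separable

lemma lap_norm_sq (x : Eucl n) : lap (fun y : Eucl n => ‖y‖ ^ 2) x = 2 * n := by
  have h₁ (t : ℝ) : HasDerivAt (fun t : ℝ => t ^ 2) (2 * t) t := by
    simpa using hasDerivAt_pow 2 t
  have h₂ (t : ℝ) : HasDerivAt (fun t : ℝ => 2 * t) 2 t := by
    simpa using (hasDerivAt_id t).const_mul 2
  simp only [EuclideanSpace.real_norm_sq_eq]
  rw [lap_sum_comp_coord h₁ h₂]
  simp [mul_comm]

lemma deriv_deriv_nonpos_of_isLocalMax {f : ℝ → ℝ} {t : ℝ} (hc : ContinuousAt f t)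
    (h : IsLocalMax f t) : deriv (deriv f) t ≤ 0 := by
  by_contra! hpos
  have hmin : IsLocalMin f t := isLocalMin_of_deriv_deriv_pos hpos h.deriv_eq_zero hc
  have hconst : f =ᶠ[𝓝 t] fun _ => f t := by
    filter_upwards [h, hmin] with s h₁ h₂ using le_antisymm h₁ h₂
  simp [hconst.deriv.deriv_eq] at hpos

lemma deriv_deriv_comp_line (hu : ContDiffAt ℝ 2 u x) (i : Fin n) :
    deriv (deriv fun t : ℝ => u (x + t • EuclideanSpace.single i 1)) 0 =
      partialDeriv i (partialDeriv i u) x := by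
  set e : Eucl n := EuclideanSpace.single i 1
  have hline (t : ℝ) : HasDerivAt (fun t : ℝ => x + t • e) e t := by
    simpa using ((hasDerivAt_id t).smul_const e).const_add x
  have hlim : Tendsto (fun t : ℝ => x + t • e) (𝓝 0) (𝓝 x) := by
    simpa using (hline 0).continuousAt.tendsto
  have hfst : deriv (fun t : ℝ => u (x + t • e)) =ᶠ[𝓝 0]
      fun t => partialDeriv i u (x + t • e) := by
    filter_upwards [hlim.eventually (eventually_differentiableAt hu)] with t ht
    exact (ht.hasFDerivAt.comp_hasDerivAt t (hline t)).deriv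
  have hsnd : HasFDerivAt (partialDeriv i u) (fderiv ℝ (partialDeriv i u) x) (x + (0 : ℝ) • e) := by
    simpa using (differentiableAt_partialDeriv hu i).hasFDerivAt
  rw [hfst.deriv_eq]
  exact (hsnd.comp_hasDerivAt 0 (hline 0)).deriv

theorem lap_nonpos_of_isLocalMax (hu : ContDiffAt ℝ 2 u x) (hx : IsLocalMax u x) :
    lap u x ≤ 0 := by
  refine Finset.sum_nonpos fun i _ => ?_
  have hline : ContinuousAt (fun t : ℝ => x + t • (EuclideanSpace.single i 1 : Eucl n)) 0 := by
    fun_prop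
  have hx₀ : x + (0 : ℝ) • (EuclideanSpace.single i 1 : Eucl n) = x := by simp
  refine (deriv_deriv_comp_line hu i).symm.trans_le (deriv_deriv_nonpos_of_isLocalMax ?_ ?_)
  · exact ContinuousAt.comp (g := u) (by simpa using hu.continuousAt) hline
  · refine IsMaxFilter.comp_tendsto (f := u) (g := fun t : ℝ => x + t • _) (b := 0)
      (by rwa [hx₀]) ?_
    simpa using hline.tendsto

lemma lap_le_lap_of_isLocalMax_sub (hu : ContDiffAt ℝ 2 u x) (hv : ContDiffAt ℝ 2 v x)
    (h : IsLocalMax (fun y => u y - v y) x) : lap u x ≤ lap v x := by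
  have := lap_nonpos_of_isLocalMax (hu.sub hv) h
  rwa [lap_sub hu hv, sub_nonpos] at this

end Laplacian

/-! ### Powers of positive reals -/

section Powers

variable {α β γ : ℝ}

lemma exists_forall_mul_rpow_le (h : α < β) (A : ℝ) {c : ℝ} (hc : 0 < c) :
    ∃ z₀ ∈ Ioo (0 : ℝ) 1, ∀ z ∈ Ioc 0 z₀, A * z ^ β ≤ c * z ^ α := by
  have hlim : Tendsto (fun z : ℝ => A * z ^ (β - α)) (𝓝 0) (𝓝 0) := by
    have := (Real.continuousAt_rpow_const 0 (β - α) (.inr (sub_pos.2 h).le)).const_mul A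
    simpa [ContinuousAt, Real.zero_rpow (sub_pos.2 h).ne'] using this
  obtain ⟨r, hr, hball⟩ := Metric.eventually_nhds_iff.1 (hlim.eventually_le_const hc)
  refine ⟨min (r / 2) (1 / 2), ⟨by positivity, by norm_num⟩, fun z hz => ?_⟩
  have hzr : dist z 0 < r := by
    rw [Real.dist_0_eq_abs, abs_of_pos hz.1]
    linarith [hz.2, min_le_left (r / 2) (1 / 2)]
  calc A * z ^ β = A * z ^ (β - α) * z ^ α := by
        rw [mul_assoc, ← Real.rpow_add hz.1, sub_add_cancel]
    _ ≤ c * z ^ α := by gcongr; exacts [Real.rpow_nonneg hz.1.le α, hball hzr]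

lemma exists_forall_mul_rpow_le_add (h : α < β) (h' : β ≤ γ) {A c : ℝ} (hA : 0 < A) (hc : 0 < c) :
    ∃ C > 0, ∀ z > 0, A * z ^ β ≤ c * z ^ α + C * z ^ γ := by
  obtain ⟨z₀, ⟨hz₀, -⟩, hsmall⟩ := exists_forall_mul_rpow_le h A hc
  refine ⟨A * z₀ ^ (β - γ), by positivity, fun z hz => ?_⟩
  obtain hle | hlt := le_or_gt z z₀
  · exact (hsmall z ⟨hz, hle⟩).trans (le_add_of_nonneg_right (by positivity))
  · calc A * z ^ β = A * z ^ (β - γ) * z ^ γ := by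
          rw [mul_assoc, ← Real.rpow_add hz, sub_add_cancel]
      _ ≤ A * z₀ ^ (β - γ) * z ^ γ := by
          gcongr A * ?_ * z ^ γ
          exact Real.rpow_le_rpow_of_nonpos hz₀ hlt.le (by linarith)
      _ ≤ c * z ^ α + A * z₀ ^ (β - γ) * z ^ γ := le_add_of_nonneg_left (by positivity)

end Powers

/-! ### Comparison principles -/

section Comparison

variable {n : ℕ} {E : Set (Eucl n)} {u ψ : Eucl n → ℝ}

theorem le_of_lap_lt_of_lt (hE : IsCompact E) (hu : ContinuousOn u E) (hψ : ContinuousOn ψ E)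
    (h : ∀ x ∈ E, ψ x < u x →
      E ∈ 𝓝 x ∧ ContDiffAt ℝ 2 u x ∧ ContDiffAt ℝ 2 ψ x ∧ lap ψ x < lap u x) :
    ∀ x ∈ E, u x ≤ ψ x := by
  by_contra! ⟨y, hyE, hy⟩
  obtain ⟨x, hxE, hmax⟩ := hE.exists_isMaxOn ⟨y, hyE⟩ (hu.sub hψ)
  have hx : ψ x < u x := sub_pos.1 ((sub_pos.2 hy).trans_le (hmax hyE))
  obtain ⟨hxn, hux, hψx, hlt⟩ := h x hxE hx
  exact hlt.not_ge (lap_le_lap_of_isLocalMax_sub hux hψx (hmax.isLocalMax hxn))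

/- At a maximum of `u / ψ` with value `t > 1`, `u` touches `t ψ` from below, so that
`t ψ ^ p ≤ -lap (t ψ) ≤ -lap u ≤ u ^ p = t ^ p ψ ^ p`, against `t ^ p < t`. -/
theorem le_of_sublinear {p : ℝ} (hp : p < 1) (hE : IsCompact E) (hu : ContinuousOn u E)
    (hψ : ContinuousOn ψ E) (hpos : ∀ x ∈ E, 0 < ψ x)
    (h : ∀ x ∈ E, ψ x < u x → E ∈ 𝓝 x ∧ ContDiffAt ℝ 2 u x ∧ ContDiffAt ℝ 2 ψ x ∧
      -lap u x ≤ u x ^ p ∧ ψ x ^ p ≤ -lap ψ x) :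
    ∀ x ∈ E, u x ≤ ψ x := by
  by_contra! ⟨y, hyE, hy⟩
  obtain ⟨x, hxE, hmax⟩ :=
    hE.exists_isMaxOn ⟨y, hyE⟩ (hu.div hψ fun z hz => (hpos z hz).ne')
  set t := u x / ψ x
  have ht : 1 < t := ((one_lt_div (hpos y hyE)).2 hy).trans_le (hmax hyE)
  have hux : u x = t * ψ x := (div_mul_cancel₀ _ (hpos x hxE).ne').symm
  obtain ⟨hxn, huC, hψC, hsub, hsup⟩ := h x hxE ((one_lt_div (hpos x hxE)).1 ht)
  have htouch : IsLocalMax (fun z => u z - t * ψ z) x := by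
    filter_upwards [hxn] with z hz
    have : u z ≤ t * ψ z := (div_le_iff₀ (hpos z hz)).1 (hmax hz)
    simp only [hux, sub_self]
    linarith
  have hlap := lap_le_lap_of_isLocalMax_sub huC (contDiffAt_const.mul hψC) htouch
  rw [lap_const_mul t hψC] at hlap
  have hlt : t ^ p * ψ x ^ p < t * ψ x ^ p :=
    mul_lt_mul_of_pos_right (Real.rpow_lt_self_of_one_lt ht hp)
      (Real.rpow_pos_of_pos (hpos x hxE) p)
  rw [hux, Real.mul_rpow (by linarith) (hpos x hxE).le] at hsub
  nlinarith

end Comparison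

/-! ### A barrier for the holes -/

section SinSum

variable {n : ℕ} {ε a : ℝ} {x m : Eucl n}

/-- The sum `∑ sin²(π xᵢ / ε)`, a smooth `εℤⁿ`-periodic substitute for the squared distance to
`εℤⁿ`, rescaled by `ε⁻²`. -/
def latticeSinSum (n : ℕ) (ε : ℝ) (x : Eucl n) : ℝ := ∑ i, Real.sin (Real.pi / ε * x i) ^ 2

lemma contDiff_latticeSinSum : ContDiff ℝ 2 (latticeSinSum n ε) :=
  ContDiff.sum fun i _ => (Real.contDiff_sin.comp
    (contDiff_const.mul (EuclideanSpace.proj i : Eucl n →L[ℝ] ℝ).contDiff)).pow 2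

lemma hasDerivAt_sin_mul_sq (b t : ℝ) : HasDerivAt (fun t => Real.sin (b * t) ^ 2)
    (2 * b * (Real.sin (b * t) * Real.cos (b * t))) t := by
  convert! (((hasDerivAt_id t).const_mul b).sin.pow 2) using 1
  simp only [id_eq, Nat.cast_ofNat, Nat.add_one_sub_one, pow_one]
  ring

lemma hasDerivAt_sin_mul_mul_cos_mul (b t : ℝ) :
    HasDerivAt (fun t => 2 * b * (Real.sin (b * t) * Real.cos (b * t)))
      (2 * b ^ 2 * (1 - 2 * Real.sin (b * t) ^ 2)) t := by
  have h := (hasDerivAt_id t).const_mul b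
  convert! (h.sin.mul h.cos).const_mul (2 * b) using 1
  simp only [id_eq]
  linear_combination (-2 * b ^ 2) * Real.cos_sq' (b * t)

lemma lap_latticeSinSum (x : Eucl n) :
    lap (latticeSinSum n ε) x = 2 * (Real.pi / ε) ^ 2 * (n - 2 * latticeSinSum n ε x) := by
  refine (lap_sum_comp_coord (hasDerivAt_sin_mul_sq (Real.pi / ε))
    (hasDerivAt_sin_mul_mul_cos_mul (Real.pi / ε)) x).trans ?_
  rw [← Finset.mul_sum, Finset.sum_sub_distrib, ← Finset.mul_sum]
  simp [latticeSinSum]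

lemma norm_fderiv_latticeSinSum_sq_le (x : Eucl n) :
    ‖fderiv ℝ (latticeSinSum n ε) x‖ ^ 2 ≤ 4 * (Real.pi / ε) ^ 2 * latticeSinSum n ε x := by
  rw [← sum_sq_partialDeriv, latticeSinSum, Finset.mul_sum]
  refine Finset.sum_le_sum fun i _ => ?_
  have h := partialDeriv_sum_comp_coord (hasDerivAt_sin_mul_sq (Real.pi / ε)) x i
  calc partialDeriv i (latticeSinSum n ε) x ^ 2
      = 4 * (Real.pi / ε) ^ 2 * Real.sin (Real.pi / ε * x i) ^ 2 *
          Real.cos (Real.pi / ε * x i) ^ 2 := by unfold latticeSinSum; rw [h]; ring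
    _ ≤ 4 * (Real.pi / ε) ^ 2 * Real.sin (Real.pi / ε * x i) ^ 2 :=
        mul_le_of_le_one_right (by positivity) (Real.cos_sq_le_one _)

lemma sin_sq_sub_lattice (hε : ε ≠ 0) (t : ℝ) (z : ℤ) :
    Real.sin (Real.pi / ε * (t - ε * z)) ^ 2 = Real.sin (Real.pi / ε * t) ^ 2 := by
  have h : Real.pi / ε * (t - ε * z) = Real.pi / ε * t - z * Real.pi := by field_simp
  rw [h, Real.sin_sub_int_mul_pi, ← sq_abs, abs_mul, abs_neg_one_zpow, one_mul, sq_abs]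

lemma latticeSinSum_le_dist_sq (hε : ε ≠ 0) (hm : m ∈ latticePts n ε) :
    latticeSinSum n ε x ≤ (Real.pi / ε) ^ 2 * dist x m ^ 2 := by
  rw [EuclideanSpace.dist_eq, Real.sq_sqrt (by positivity), Finset.mul_sum]
  refine Finset.sum_le_sum fun i _ => ?_
  obtain ⟨z, hz⟩ := hm i
  rw [← sin_sq_sub_lattice hε _ z, ← hz, Real.dist_eq, sq_abs, ← mul_pow]
  exact sq_le_sq.2 Real.abs_sin_le_abs

lemma exists_latticePts_dist_sq_le (hε : ε ≠ 0) (x : Eucl n) :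
    ∃ m ∈ latticePts n ε, (1 / ε) ^ 2 * dist x m ^ 2 ≤ latticeSinSum n ε x := by
  refine ⟨WithLp.toLp 2 fun i => ε * (round (x i / ε) : ℝ), fun i => ⟨_, rfl⟩, ?_⟩
  rw [EuclideanSpace.dist_eq, Real.sq_sqrt (by positivity), Finset.mul_sum]
  refine Finset.sum_le_sum fun i _ => ?_
  set d := x i / ε - round (x i / ε)
  have hxd : x i - ε * round (x i / ε) = ε * d := by rw [mul_sub, mul_div_cancel₀ _ hε]
  have hpi := Real.pi_pos
  have hle : 2 * |d| ≤ |Real.sin (Real.pi * d)| := by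
    have h := Real.mul_abs_le_abs_sin (x := Real.pi * d) (by
      rw [abs_mul, abs_of_pos hpi]; nlinarith [abs_sub_round (x i / ε)])
    rwa [abs_mul, abs_of_pos hpi, ← mul_assoc, div_mul_cancel₀ _ hpi.ne'] at h
  rw [← sin_sq_sub_lattice hε _ (round (x i / ε)), Real.dist_eq, sq_abs, ← mul_pow, hxd,
    ← mul_assoc, ← mul_assoc, one_div_mul_cancel hε, div_mul_cancel₀ _ hε, one_mul, sq_le_sq]
  linarith [abs_nonneg d]

lemma latticeSinSum_le_of_mem_holes (hε : ε ≠ 0) (hx : x ∈ holes n ε a) :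
    latticeSinSum n ε x ≤ Real.pi ^ 2 * (a / ε) ^ 2 := by
  obtain ⟨m, hm, hd⟩ := mem_iUnion₂.1 hx
  calc latticeSinSum n ε x ≤ (Real.pi / ε) ^ 2 * dist x m ^ 2 := latticeSinSum_le_dist_sq hε hm
    _ ≤ (Real.pi / ε) ^ 2 * a ^ 2 := by gcongr; exact hd
    _ = Real.pi ^ 2 * (a / ε) ^ 2 := by ring

lemma le_latticeSinSum_of_notMem_holes (hε : ε ≠ 0) (ha : 0 ≤ a) (hx : x ∉ holes n ε a) :
    (a / ε) ^ 2 ≤ latticeSinSum n ε x := by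
  obtain ⟨m, hm, hle⟩ := exists_latticePts_dist_sq_le hε x
  have hd : a ≤ dist x m := by
    by_contra! h
    exact hx (mem_iUnion₂.2 ⟨m, hm, h.le⟩)
  calc (a / ε) ^ 2 = (1 / ε) ^ 2 * a ^ 2 := by ring
    _ ≤ (1 / ε) ^ 2 * dist x m ^ 2 := by gcongr
    _ ≤ latticeSinSum n ε x := hle

lemma lap_latticeSinSum_rpow_neg_le (hx : 0 < latticeSinSum n ε x) {q : ℝ} (hq : 0 ≤ q) :
    lap (fun y => latticeSinSum n ε y ^ (-q)) x ≤
      (Real.pi / ε) ^ 2 * (4 * q * latticeSinSum n ε x ^ (-q) -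
        2 * q * (n - 2 - 2 * q) * latticeSinSum n ε x ^ (-q - 1)) := by
  rw [lap_rpow contDiff_latticeSinSum.contDiffAt hx, lap_latticeSinSum]
  set S := latticeSinSum n ε x
  have hS₁ : S ^ (-q - 1) * S = S ^ (-q) := by rw [← Real.rpow_add_one hx.ne']; ring_nf
  have hS₂ : S ^ (-q - 2) * S = S ^ (-q - 1) := by rw [← Real.rpow_add_one hx.ne']; ring_nf
  have hgrad := norm_fderiv_latticeSinSum_sq_le (ε := ε) x
  calc -q * S ^ (-q - 1) * (2 * (Real.pi / ε) ^ 2 * (n - 2 * S)) +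
        -q * (-q - 1) * S ^ (-q - 2) * ‖fderiv ℝ (latticeSinSum n ε) x‖ ^ 2
      ≤ -q * S ^ (-q - 1) * (2 * (Real.pi / ε) ^ 2 * (n - 2 * S)) +
        -q * (-q - 1) * S ^ (-q - 2) * (4 * (Real.pi / ε) ^ 2 * S) := by
        have : 0 ≤ -q * (-q - 1) := by nlinarith
        gcongr
    _ = (Real.pi / ε) ^ 2 * (4 * q * (S ^ (-q - 1) * S) - 2 * q * n * S ^ (-q - 1) +
        4 * q * (q + 1) * (S ^ (-q - 2) * S)) := by ring
    _ = _ := by rw [hS₁, hS₂]; ring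

end SinSum

section HoleBarrier

variable {n : ℕ} {ε : ℝ} {x : Eucl n}

/-- A barrier of order one on the holes of critical radius `aStar n ε`. With
`S = latticeSinSum n ε`, the term `ε² S ^ (-(n - 2) / 2)` mimics the fundamental solution at the
lattice points, and the less singular second term makes the sum strictly superharmonic near them. -/
def holeBarrier (n : ℕ) (ε : ℝ) (x : Eucl n) : ℝ :=
  ε ^ 2 * (latticeSinSum n ε x ^ (-(((n : ℝ) - 2) / 2)) +
    latticeSinSum n ε x ^ (-(((n : ℝ) - 2) / 2 - 1 / 4)))

lemma contDiffAt_latticeSinSum_rpow (hx : 0 < latticeSinSum n ε x) (q : ℝ) :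
    ContDiffAt ℝ 2 (fun y => latticeSinSum n ε y ^ q) x :=
  contDiff_latticeSinSum.contDiffAt.rpow_const_of_ne hx.ne'

lemma contDiffAt_holeBarrier (hx : 0 < latticeSinSum n ε x) : ContDiffAt ℝ 2 (holeBarrier n ε) x :=
  contDiffAt_const.mul
    ((contDiffAt_latticeSinSum_rpow hx _).add (contDiffAt_latticeSinSum_rpow hx _))

lemma holeBarrier_pos (hε : ε ≠ 0) (hx : 0 < latticeSinSum n ε x) : 0 < holeBarrier n ε x := by
  unfold holeBarrier
  positivity

lemma exists_lap_holeBarrier_le (hn : 3 ≤ n) :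
    ∃ C > 0, ∀ ε ≠ 0, ∀ x, 0 < latticeSinSum n ε x →
      lap (holeBarrier n ε) x ≤ C - holeBarrier n ε x / ε ^ 2 := by
  have hn' : (3 : ℝ) ≤ n := by exact_mod_cast hn
  set e : ℝ := ((n : ℝ) - 2) / 2 with he
  set s : ℝ := e - 1 / 4 with hs
  have he₀ : 0 < e := by linarith
  have hs₀ : 0 < s := by linarith
  obtain ⟨C₁, hC₁, h₁⟩ := exists_forall_mul_rpow_le_add (α := -s - 1) (β := -e) (γ := 0)
    (A := 4 * e * Real.pi ^ 2 + 1) (c := Real.pi ^ 2 * s / 2) (by linarith) (by linarith)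
    (by positivity) (by positivity)
  obtain ⟨C₂, hC₂, h₂⟩ := exists_forall_mul_rpow_le_add (α := -s - 1) (β := -s) (γ := 0)
    (A := 4 * s * Real.pi ^ 2 + 1) (c := Real.pi ^ 2 * s / 2) (by linarith) (by linarith)
    (by positivity) (by positivity)
  refine ⟨C₁ + C₂, by positivity, fun ε hε x hx => ?_⟩
  have hlap_e := lap_latticeSinSum_rpow_neg_le hx he₀.le
  have hlap_s := lap_latticeSinSum_rpow_neg_le hx hs₀.le
  rw [show (n : ℝ) - 2 - 2 * e = 0 by rw [he]; ring, mul_zero, zero_mul, sub_zero] at hlap_e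
  rw [show (n : ℝ) - 2 - 2 * s = 1 / 2 by rw [hs, he]; ring] at hlap_s
  specialize h₁ _ hx
  specialize h₂ _ hx
  rw [Real.rpow_zero] at h₁ h₂
  unfold holeBarrier
  have hS := contDiffAt_latticeSinSum_rpow hx
  rw [lap_const_mul _ ((hS _).add (hS _)), lap_add (hS _) (hS _),
    mul_div_cancel_left₀ _ (pow_ne_zero 2 hε)]
  set S := latticeSinSum n ε x
  calc _ ≤ ε ^ 2 * ((Real.pi / ε) ^ 2 * (4 * e * S ^ (-e)) +
        (Real.pi / ε) ^ 2 * (4 * s * S ^ (-s) - 2 * s * (1 / 2) * S ^ (-s - 1))) := by gcongr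
    _ = Real.pi ^ 2 * (4 * e * S ^ (-e) + 4 * s * S ^ (-s) - s * S ^ (-s - 1)) := by
        field_simp
        ring
    _ ≤ _ := by linarith

lemma aStar_pos (n : ℕ) (hε : 0 < ε) : 0 < aStar n ε := Real.rpow_pos_of_pos hε _

lemma aStar_div_sq_rpow (hn : 3 ≤ n) (hε : 0 < ε) :
    ((aStar n ε / ε) ^ 2) ^ (-(((n : ℝ) - 2) / 2)) = (ε ^ 2)⁻¹ := by
  have hn' : (n : ℝ) - 2 ≠ 0 := by
    have : (3 : ℝ) ≤ n := by exact_mod_cast hn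
    linarith
  have hdiv : aStar n ε / ε = ε ^ (2 / ((n : ℝ) - 2)) := by
    rw [aStar, ← Real.rpow_sub_one hε.ne']
    congr 1
    field_simp
    ring
  rw [hdiv, ← Real.rpow_natCast, ← Real.rpow_mul hε.le, ← Real.rpow_mul hε.le,
    ← Real.rpow_natCast ε 2, ← Real.rpow_neg hε.le]
  congr 1
  field_simp

lemma le_holeBarrier_of_mem_holes (hn : 3 ≤ n) (hε : 0 < ε) (hS : 0 < latticeSinSum n ε x)
    (hx : x ∈ holes n ε (aStar n ε)) :
    (Real.pi ^ 2) ^ (-(((n : ℝ) - 2) / 2)) ≤ holeBarrier n ε x := by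
  have hn' : (3 : ℝ) ≤ n := by exact_mod_cast hn
  unfold holeBarrier
  set S := latticeSinSum n ε x
  calc (Real.pi ^ 2) ^ (-(((n : ℝ) - 2) / 2))
      = ε ^ 2 * (Real.pi ^ 2 * (aStar n ε / ε) ^ 2) ^ (-(((n : ℝ) - 2) / 2)) := by
        rw [Real.mul_rpow (by positivity) (by positivity), aStar_div_sq_rpow hn hε]
        field_simp
    _ ≤ ε ^ 2 * S ^ (-(((n : ℝ) - 2) / 2)) := by
        gcongr ε ^ 2 * ?_
        exact Real.rpow_le_rpow_of_nonpos hS (latticeSinSum_le_of_mem_holes hε.ne' hx) (by linarith)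
    _ ≤ _ := by gcongr; exact le_add_of_nonneg_right (by positivity)

lemma holeBarrier_le_two (hn : 3 ≤ n) (hε : ε ∈ Ioo (0 : ℝ) 1)
    (hS : (aStar n ε / ε) ^ 2 ≤ latticeSinSum n ε x) : holeBarrier n ε x ≤ 2 := by
  have hn' : (3 : ℝ) ≤ n := by exact_mod_cast hn
  set r := (aStar n ε / ε) ^ 2
  have hr : 0 < r := pow_pos (div_pos (aStar_pos n hε.1) hε.1) 2
  have hr₁ : r ≤ 1 := by
    refine pow_le_one₀ (div_pos (aStar_pos n hε.1) hε.1).le ((div_le_one hε.1).2 ?_)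
    refine (Real.rpow_le_rpow_of_exponent_ge hε.1 hε.2.le ?_).trans_eq (Real.rpow_one ε)
    rw [le_div_iff₀ (by linarith)]
    linarith
  have hpow {q : ℝ} (hq : 0 ≤ q) (hq' : q ≤ ((n : ℝ) - 2) / 2) :
      latticeSinSum n ε x ^ (-q) ≤ (ε ^ 2)⁻¹ := by
    rw [← aStar_div_sq_rpow hn hε.1]
    exact (Real.rpow_le_rpow_of_nonpos hr hS (by linarith)).trans
      (Real.rpow_le_rpow_of_exponent_ge hr hr₁ (by linarith))
  have hε₂ : ε ^ 2 ≠ 0 := pow_ne_zero 2 hε.1.ne'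
  calc holeBarrier n ε x ≤ ε ^ 2 * ((ε ^ 2)⁻¹ + (ε ^ 2)⁻¹) := by
        unfold holeBarrier
        gcongr <;> exact hpow (by linarith) (by linarith)
    _ = 2 := by rw [← two_mul, mul_left_comm, mul_inv_cancel₀ hε₂, mul_one]

end HoleBarrier

/-! ### Domains with a defining function -/

lemma exists_pos_forall_abs_le {X : Type*} [TopologicalSpace X] {K : Set X} {f : X → ℝ}
    (hK : IsCompact K) (hf : ContinuousOn f K) : ∃ C > 0, ∀ x ∈ K, |f x| ≤ C := by
  obtain ⟨C, hC, h⟩ := (hK.image_of_continuousOn hf).isBounded.exists_pos_norm_le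
  exact ⟨C, hC, fun x hx => h _ (mem_image_of_mem f hx)⟩

/-- `ρ` is a `C²` defining function of `Ω`: positive exactly on `Ω`, with nonzero gradient on the
boundary. It plays the role of the distance to the boundary. -/
structure IsDefiningFunction {n : ℕ} (Ω : Set (Eucl n)) (ρ : Eucl n → ℝ) : Prop where
  contDiff : ContDiff ℝ 2 ρ
  mem_iff : ∀ x, x ∈ Ω ↔ 0 < ρ x
  fderiv_ne_zero : ∀ x ∈ frontier Ω, fderiv ℝ ρ x ≠ 0

lemma HasSmoothBoundary.exists_isDefiningFunction {n : ℕ} {Ω : Set (Eucl n)}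
    (h : HasSmoothBoundary Ω) : ∃ ρ, IsDefiningFunction Ω ρ := by
  obtain ⟨f, hf, hΩ, hfr⟩ := h
  refine ⟨fun x => -f x, (contDiff_infty.1 hf 2).neg, fun x => ?_, fun x hx => ?_⟩
  · simp [hΩ]
  · simpa using hfr x hx

namespace IsDefiningFunction

variable {n : ℕ} {Ω : Set (Eucl n)} {ρ : Eucl n → ℝ}

lemma isOpen (hρ : IsDefiningFunction Ω ρ) : IsOpen Ω := by
  have h : Ω = {x | 0 < ρ x} := Set.ext hρ.mem_iff
  rw [h]
  exact isOpen_lt continuous_const hρ.contDiff.continuous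

lemma nonneg (hρ : IsDefiningFunction Ω ρ) {x : Eucl n} (hx : x ∈ closure Ω) : 0 ≤ ρ x :=
  closure_minimal (fun y hy => ((hρ.mem_iff y).1 hy).le)
    (isClosed_le continuous_const hρ.contDiff.continuous) hx

lemma exists_abs_lap_le (hρ : IsDefiningFunction Ω ρ) (hb : Bornology.IsBounded Ω) :
    ∃ Λ > 0, ∀ x ∈ closure Ω, |lap ρ x| ≤ Λ :=
  exists_pos_forall_abs_le hb.isCompact_closure (continuous_lap hρ.contDiff).continuousOn

lemma exists_le_norm_fderiv_sq_add (hρ : IsDefiningFunction Ω ρ) (hb : Bornology.IsBounded Ω) :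
    ∃ c > 0, ∀ x ∈ closure Ω, c ≤ ‖fderiv ℝ ρ x‖ ^ 2 + ρ x := by
  refine hb.isCompact_closure.exists_forall_le' ?_ fun x hx => ?_
  · have := hρ.contDiff.continuous_fderiv (by norm_num)
    have := hρ.contDiff.continuous
    fun_prop
  · by_cases hxΩ : x ∈ Ω
    · have := (hρ.mem_iff x).1 hxΩ
      positivity
    · have hfr := hρ.fderiv_ne_zero x ⟨hx, hρ.isOpen.interior_eq.symm ▸ hxΩ⟩
      have := hρ.nonneg hx
      positivity

lemma exists_le_mul_dist (hρ : IsDefiningFunction Ω ρ) (hb : Bornology.IsBounded Ω) :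
    ∃ L > 0, ∀ y ∈ Ω, ∀ x ∉ Ω, dist x y ≤ 1 → ρ y ≤ L * dist x y := by
  obtain ⟨R, hR⟩ := hb.subset_closedBall 0
  obtain ⟨K, hK⟩ := hρ.contDiff.contDiffOn.exists_lipschitzOnWith (by norm_num)
    (convex_closedBall (0 : Eucl n) (R + 1)) (isCompact_closedBall 0 (R + 1))
  refine ⟨K + 1, by positivity, fun y hy x hx hxy => ?_⟩
  have hyR : dist y 0 ≤ R := hR hy
  have hyB : y ∈ closedBall (0 : Eucl n) (R + 1) := by
    rw [mem_closedBall]; linarith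
  have hxB : x ∈ closedBall (0 : Eucl n) (R + 1) := by
    rw [mem_closedBall]; linarith [dist_triangle x y 0]
  have hρx : ρ x ≤ 0 := not_lt.1 (mt (hρ.mem_iff x).2 hx)
  have hlip := hK.dist_le_mul x hxB y hyB
  rw [Real.dist_eq] at hlip
  linarith [neg_abs_le (ρ x - ρ y), dist_nonneg (x := x) (y := y)]

lemma exists_lap_mul_sub_sq_le (hρ : IsDefiningFunction Ω ρ) (hb : Bornology.IsBounded Ω) :
    ∃ δ > 0, ∃ c > 0, ∀ x ∈ closure Ω, ρ x ≤ δ →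
      lap (fun y => 2 * δ * ρ y - ρ y ^ 2) x ≤ -c := by
  obtain ⟨Λ, hΛ, hlap⟩ := hρ.exists_abs_lap_le hb
  obtain ⟨c, hc, hgrad⟩ := hρ.exists_le_norm_fderiv_sq_add hb
  set δ := c / (2 + 2 * Λ)
  have hδ : δ * (2 + 2 * Λ) = c := div_mul_cancel₀ _ (by positivity)
  have hδ₀ : 0 < δ := by positivity
  refine ⟨δ, hδ₀, c / 2, by positivity, fun x hx hxδ => ?_⟩
  have hF (z : ℝ) : HasDerivAt (fun z => 2 * δ * z - z ^ 2) (2 * δ - 2 * z) z := by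
    simpa using ((hasDerivAt_id' z).const_mul (2 * δ)).fun_sub ((hasDerivAt_id' z).fun_pow 2)
  have hF' : HasDerivAt (fun z => 2 * δ - 2 * z) (-2) (ρ x) := by
    simpa using ((hasDerivAt_id (ρ x)).const_mul 2).const_sub (2 * δ)
  rw [lap_comp hρ.contDiff.contDiffAt (.of_forall hF) hF']
  have hmul : (2 * δ - 2 * ρ x) * lap ρ x ≤ 2 * δ * Λ := by
    have h₁ := (le_abs_self _).trans (hlap x hx)
    have h₂ := hρ.nonneg hx
    nlinarith
  nlinarith [hgrad x hx]

lemma exists_strip_barrier (hρ : IsDefiningFunction Ω ρ) (hb : Bornology.IsBounded Ω) (M N : ℝ) :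
    ∃ δ > 0, ∃ A > 0, M ≤ A * δ ^ 2 ∧ ∀ x ∈ closure Ω, ρ x ≤ δ →
      lap (fun y => A * (2 * δ * ρ y - ρ y ^ 2)) x < -N := by
  obtain ⟨δ, hδ, c, hc, hstrip⟩ := hρ.exists_lap_mul_sub_sq_le hb
  set A := (|N| + 1) / c + |M| / δ ^ 2
  have hA : 0 < A := by positivity
  refine ⟨δ, hδ, A, hA, (le_abs_self M).trans ?_, fun x hx hxδ => ?_⟩
  · exact (div_le_iff₀ (by positivity)).1 (le_add_of_nonneg_left (by positivity))
  · have hAc : |N| + 1 ≤ A * c := (div_le_iff₀ hc).1 (le_add_of_nonneg_right (by positivity))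
    rw [lap_const_mul A ((contDiff_const.mul hρ.contDiff).sub (hρ.contDiff.pow 2)).contDiffAt]
    nlinarith [hstrip x hx hxδ, le_abs_self N]

theorem exists_le_mul_of_lap_ge (hρ : IsDefiningFunction Ω ρ) (hb : Bornology.IsBounded Ω)
    (M N : ℝ) : ∃ C > 0, ∀ u : Eucl n → ℝ, ContinuousOn u (closure Ω) → (∀ x ∈ Ω, u x ≤ M) →
      (∀ x ∈ frontier Ω, u x ≤ 0) →
      (∀ x ∈ Ω, 0 < u x → ContDiffAt ℝ 2 u x ∧ -N ≤ lap u x) → ∀ x ∈ Ω, u x ≤ C * ρ x := by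
  obtain ⟨δ, hδ, A, hA, hM', hstrip⟩ := hρ.exists_strip_barrier hb M N
  refine ⟨2 * A * δ, by positivity, fun u hu hM hfr hlap x hx => ?_⟩
  have hρc := hρ.contDiff.continuous
  set V : Eucl n → ℝ := fun y => A * (2 * δ * ρ y - ρ y ^ 2)
  have hV : ContDiff ℝ 2 V :=
    contDiff_const.mul ((contDiff_const.mul hρ.contDiff).sub (hρ.contDiff.pow 2))
  suffices h : ∀ y ∈ closure Ω ∩ {y | ρ y ≤ δ}, u y ≤ V y by
    obtain hle | hlt := le_or_gt (ρ x) δ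
    · have := h x ⟨subset_closure hx, hle⟩
      simp only [V] at this
      nlinarith [mul_nonneg hA.le (sq_nonneg (ρ x))]
    · nlinarith [hM x hx, mul_pos hA hδ]
  refine le_of_lap_lt_of_lt (hb.isCompact_closure.inter_right (isClosed_le hρc continuous_const))
    (hu.mono inter_subset_left) hV.continuous.continuousOn fun y ⟨hy, hyδ⟩ hlt => ?_
  rw [mem_ofPred_eq] at hyδ
  have hV₀ : 0 ≤ V y := by
    have : 0 ≤ ρ y * (2 * δ - ρ y) := mul_nonneg (hρ.nonneg hy) (by linarith)
    exact mul_nonneg hA.le (by linarith)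
  have hyΩ : y ∈ Ω := by
    by_contra hyΩ
    linarith [hfr y ⟨hy, hρ.isOpen.interior_eq.symm ▸ hyΩ⟩]
  have hyδ' : ρ y < δ := by
    refine lt_of_le_of_ne hyδ fun heq => ?_
    simp only [V, heq] at hlt
    linarith [hM y hyΩ]
  obtain ⟨huC, hul⟩ := hlap y hyΩ (hV₀.trans_lt hlt)
  refine ⟨?_, huC, hV.contDiffAt, (hstrip y hy hyδ).trans_le hul⟩
  filter_upwards [hρ.isOpen.mem_nhds hyΩ, hρc.continuousAt.eventually_lt_const hyδ']
    with z hz hzδ using ⟨subset_closure hz, hzδ.le⟩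

theorem exists_lap_rpow_half_le (hρ : IsDefiningFunction Ω ρ) (hb : Bornology.IsBounded Ω) :
    ∃ a > 0, ∃ B > 0, ∀ x ∈ Ω,
      lap (fun y => ρ y ^ (1 / 2 : ℝ)) x ≤ B - a * ρ x ^ (-(3 / 2) : ℝ) := by
  obtain ⟨Λ, hΛ, hlap⟩ := hρ.exists_abs_lap_le hb
  obtain ⟨c, hc, hgrad⟩ := hρ.exists_le_norm_fderiv_sq_add hb
  obtain ⟨B, hB, hpow⟩ := exists_forall_mul_rpow_le_add (α := -(3 / 2)) (β := -(1 / 2)) (γ := 0)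
    (A := Λ / 2 + 1 / 4) (c := c / 8) (by norm_num) (by norm_num) (by positivity) (by positivity)
  refine ⟨c / 8, by positivity, B, hB, fun x hx => ?_⟩
  have hρx : 0 < ρ x := (hρ.mem_iff x).1 hx
  have hx' := subset_closure hx
  specialize hpow _ hρx
  rw [lap_rpow hρ.contDiff.contDiffAt hρx]
  norm_num at hpow ⊢
  have hmul : ρ x ^ (-(3 / 2) : ℝ) * ρ x = ρ x ^ (-(1 / 2) : ℝ) := by
    rw [← Real.rpow_add_one hρx.ne']; norm_num
  have h₁ : ρ x ^ (-(1 / 2) : ℝ) * lap ρ x ≤ ρ x ^ (-(1 / 2) : ℝ) * Λ := by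
    gcongr
    exact (le_abs_self _).trans (hlap x hx')
  have h₂ : ρ x ^ (-(3 / 2) : ℝ) * c ≤
      ρ x ^ (-(3 / 2) : ℝ) * ‖fderiv ℝ ρ x‖ ^ 2 + ρ x ^ (-(1 / 2) : ℝ) := by
    rw [← hmul, ← mul_add]
    gcongr
    exact hgrad x hx'
  linarith

end IsDefiningFunction

/-! ### Positive solutions -/

section Holes

variable {n : ℕ} {ε a : ℝ}

lemma isClosed_latticePts (n : ℕ) (hε : ε ≠ 0) : IsClosed (latticePts n ε) := by
  have h : latticePts n ε = ⋂ i, (fun x : Eucl n => x i / ε) ⁻¹' range ((↑) : ℤ → ℝ) := by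
    ext x
    simp [latticePts, eq_div_iff hε, mul_comm ε, eq_comm]
  rw [h]
  exact isClosed_iInter fun i =>
    Int.isClosedEmbedding_coe_real.isClosed_range.preimage (by fun_prop)

lemma isClosed_holes (n : ℕ) (hε : ε ≠ 0) (ha : 0 ≤ a) : IsClosed (holes n ε a) := by
  rw [holes, ← (isClosed_latticePts n hε).cthickening_eq_biUnion_closedBall ha]
  exact isClosed_cthickening

lemma add_smul_mem_holes {v x : Eucl n} (hv : v ∈ latticePts n 1) (hx : x ∈ holes n ε a) :
    x + ε • v ∈ holes n ε a := by
  obtain ⟨m, hm, hxm⟩ := mem_iUnion₂.1 hx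
  refine mem_iUnion₂.2 ⟨m + ε • v, fun i => ?_, by rwa [mem_closedBall, dist_add_right]⟩
  obtain ⟨z, hz⟩ := hm i
  obtain ⟨z', hz'⟩ := hv i
  exact ⟨z + z', by simp [hz, hz', mul_add]⟩

lemma le_latticeSinSum_of_mem_closure {Ω : Set (Eucl n)} {x : Eucl n} (hε : ε ≠ 0) (ha : 0 ≤ a)
    (hx : x ∈ closure (Ω \ holes n ε a)) : (a / ε) ^ 2 ≤ latticeSinSum n ε x :=
  closure_minimal (fun _ hy => le_latticeSinSum_of_notMem_holes hε ha hy.2)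
    (isClosed_le continuous_const contDiff_latticeSinSum.continuous) hx

lemma latticeSinSum_pos_of_mem_closure {Ω : Set (Eucl n)} {x : Eucl n} (hε : 0 < ε)
    (hx : x ∈ closure (Ω \ holes n ε (aStar n ε))) : 0 < latticeSinSum n ε x :=
  (pow_pos (div_pos (aStar_pos n hε) hε) 2).trans_le
    (le_latticeSinSum_of_mem_closure hε.ne' (aStar_pos n hε).le hx)

end Holes

/-- `φ` is a positive classical solution of `Δφ + φ ^ p = 0` in the open set `D`, extended
continuously by zero. -/
structure IsPosSolution {n : ℕ} (D : Set (Eucl n)) (p : ℝ) (φ : Eucl n → ℝ) : Prop where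
  isOpen : IsOpen D
  continuous : Continuous φ
  contDiffAt : ∀ x ∈ D, ContDiffAt ℝ 2 φ x
  lap_eq : ∀ x ∈ D, lap φ x = -(φ x ^ p)
  pos : ∀ x ∈ D, 0 < φ x
  eq_zero : ∀ x ∉ D, φ x = 0

section Solutions

variable {n : ℕ} {D Ω : Set (Eucl n)} {p : ℝ} {φ : Eucl n → ℝ} {x : Eucl n}

lemma IsEVSol.isPosSolution {ε a : ℝ} (h : IsEVSol n Ω ε a p φ) (hΩ : IsOpen Ω) (hε : ε ≠ 0)
    (ha : 0 ≤ a) : IsPosSolution (Ω \ holes n ε a) p φ := by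
  obtain ⟨hcont, hC, heq, hpos, hzero⟩ := h
  have hD : IsOpen (Ω \ holes n ε a) := hΩ.sdiff (isClosed_holes n hε ha)
  have hout : ContinuousOn φ Ωᶜ := continuousOn_const.congr fun x hx => hzero x fun h => hx h.1
  refine ⟨hD, ?_, fun x hx => (hC x hx).contDiffAt (hD.mem_nhds hx),
    fun x hx => eq_neg_of_add_eq_zero_left (heq x hx), hpos, hzero⟩
  rw [← continuousOn_univ]
  refine (hcont.union_of_isClosed hout isClosed_closure hΩ.isClosed_compl).mono fun x _ => ?_
  exact (em (x ∈ Ω)).imp_left fun h => subset_closure h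

lemma rpow_mul_sub_norm_sq_le_neg_lap (hn : n ≠ 0) (hp₀ : 0 ≤ p) {c Q : ℝ} (hc : 0 ≤ c)
    (hcQ : (c * Q) ^ p ≤ c) (hx : 0 ≤ c * (Q - ‖x‖ ^ 2)) :
    (c * (Q - ‖x‖ ^ 2)) ^ p ≤ -lap (fun y => c * (Q - ‖y‖ ^ 2)) x := by
  have hn' : (1 : ℝ) ≤ n := by exact_mod_cast Nat.one_le_iff_ne_zero.2 hn
  have hle : c * (Q - ‖x‖ ^ 2) ≤ c * Q :=
    mul_le_mul_of_nonneg_left (sub_le_self _ (sq_nonneg ‖x‖)) hc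
  rw [lap_const_mul c (contDiffAt_const.sub (contDiff_norm_sq ℝ).contDiffAt),
    lap_sub contDiffAt_const (contDiff_norm_sq ℝ).contDiffAt, lap_const, lap_norm_sq]
  nlinarith [Real.rpow_le_rpow hx hle hp₀]

namespace IsPosSolution

lemma nonneg (h : IsPosSolution D p φ) (x : Eucl n) : 0 ≤ φ x :=
  (em (x ∈ D)).elim (fun hx => (h.pos x hx).le) fun hx => (h.eq_zero x hx).ge

lemma mem_of_pos (h : IsPosSolution D p φ) (hx : 0 < φ x) : x ∈ D :=
  by_contra fun hxD => hx.ne' (h.eq_zero x hxD)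

theorem le_of_subset_closedBall (h : IsPosSolution D p φ) (hn : n ≠ 0) (hp₀ : 0 ≤ p) (hp₁ : p < 1)
    {R : ℝ} (hD : D ⊆ closedBall 0 R) (x : Eucl n) : φ x ≤ (R ^ 2 + 1) ^ (1 / (1 - p)) := by
  set Q : ℝ := R ^ 2 + 1
  have hQ : 0 < Q := by positivity
  set c : ℝ := Q ^ (p / (1 - p))
  have hc : 0 < c := by positivity
  have hcQ : c * Q = Q ^ (1 / (1 - p)) := by
    rw [← Real.rpow_add_one hQ.ne']
    congr 1
    field_simp [(sub_pos.2 hp₁).ne']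
    ring
  have hcp : (c * Q) ^ p = c := by rw [hcQ, ← Real.rpow_mul hQ.le, one_div_mul_eq_div]
  have hψC : ContDiff ℝ 2 fun y : Eucl n => c * (Q - ‖y‖ ^ 2) :=
    contDiff_const.mul (contDiff_const.sub (contDiff_norm_sq ℝ))
  have hψpos : ∀ y ∈ closedBall (0 : Eucl n) R, 0 < c * (Q - ‖y‖ ^ 2) := fun y hy => by
    have : ‖y‖ ^ 2 ≤ R ^ 2 := by gcongr; exact mem_closedBall_zero_iff.1 hy
    exact mul_pos hc (by linarith)
  by_cases hx : x ∈ D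
  · refine (le_of_sublinear hp₁ (isCompact_closedBall (0 : Eucl n) R) h.continuous.continuousOn
      hψC.continuous.continuousOn hψpos (fun y hyR hy => ?_) x (hD hx)).trans ?_
    · have hyD : y ∈ D := h.mem_of_pos ((hψpos y hyR).trans hy)
      exact ⟨mem_of_superset (h.isOpen.mem_nhds hyD) hD, h.contDiffAt y hyD, hψC.contDiffAt,
        by rw [h.lap_eq y hyD, neg_neg],
        rpow_mul_sub_norm_sq_le_neg_lap hn hp₀ hc.le hcp.le (hψpos y hyR).le⟩
    · exact (mul_le_mul_of_nonneg_left (sub_le_self _ (sq_nonneg ‖x‖)) hc.le).trans_eq hcQ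
  · rw [h.eq_zero x hx]
    positivity

end IsPosSolution

end Solutions

/-! ### Bounds uniform in the size of the holes -/

section UniformBounds

variable {n : ℕ} {Ω : Set (Eucl n)} {p : ℝ} {ρ : Eucl n → ℝ}

lemma exists_isPosSolution_le (hn : n ≠ 0) (hΩ : Bornology.IsBounded Ω) (hp₀ : 0 ≤ p)
    (hp₁ : p < 1) :
    ∃ M > 0, ∀ D ⊆ Ω, ∀ φ, IsPosSolution D p φ → ∀ x, φ x ≤ M := by
  obtain ⟨R, hR⟩ := hΩ.subset_closedBall 0
  exact ⟨(R ^ 2 + 1) ^ (1 / (1 - p)), by positivity, fun D hD φ h x =>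
    h.le_of_subset_closedBall hn hp₀ hp₁ (hD.trans hR) x⟩

lemma IsDefiningFunction.exists_isPosSolution_le_mul (hρ : IsDefiningFunction Ω ρ) (hn : n ≠ 0)
    (hΩ : Bornology.IsBounded Ω) (hp₀ : 0 ≤ p) (hp₁ : p < 1) :
    ∃ C > 0, ∀ D ⊆ Ω, ∀ φ, IsPosSolution D p φ → ∀ x ∈ Ω, φ x ≤ C * ρ x := by
  obtain ⟨M, -, hM⟩ := exists_isPosSolution_le hn hΩ hp₀ hp₁
  obtain ⟨C, hC, hle⟩ := hρ.exists_le_mul_of_lap_ge hΩ M (M ^ p)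
  refine ⟨C, hC, fun D hD φ h => hle φ h.continuous.continuousOn (fun x _ => hM D hD φ h x)
    (fun x hx => ?_) fun x _ hx => ?_⟩
  · exact (h.eq_zero x fun hxD => (hρ.isOpen.frontier_eq ▸ hx).2 (hD hxD)).le
  · have hxD := h.mem_of_pos hx
    refine ⟨h.contDiffAt x hxD, ?_⟩
    rw [h.lap_eq x hxD, neg_le_neg_iff]
    exact Real.rpow_le_rpow hx.le (hM D hD φ h x) hp₀

/- Any `σ` with `lap σ ≥ -C` gives the subsolution `t σ ^ k`, `k = 1 / (1 - p)`: since
`k p = k - 1`, both sides are multiples of `σ ^ (k - 1)`, and `t` is chosen to match them. -/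
lemma exists_neg_lap_mul_rpow_le (hp₀ : 0 ≤ p) (hp₁ : p < 1) {C : ℝ} (hC : 0 < C) :
    ∃ t > 0, ∀ (σ : Eucl n → ℝ) (x : Eucl n), ContDiffAt ℝ 2 σ x → 0 < σ x → -C ≤ lap σ x →
      -lap (fun y => t * σ y ^ (1 / (1 - p))) x ≤ (t * σ x ^ (1 / (1 - p))) ^ p := by
  have hp : 0 < 1 - p := sub_pos.2 hp₁
  set k := 1 / (1 - p)
  have hk : 1 ≤ k := by rw [le_div_iff₀ hp]; linarith
  have hkp : k * p = k - 1 := by simp only [k]; field_simp; ring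
  have hkC : 0 < k * C := by positivity
  refine ⟨(k * C) ^ (-k), by positivity, fun σ x hσ hx hlap => ?_⟩
  set t := (k * C) ^ (-k)
  have ht : t * (k * C) = t ^ p := by
    rw [← Real.rpow_add_one hkC.ne', ← Real.rpow_mul hkC.le, neg_mul, hkp]
    ring_nf
  have hgrad : 0 ≤ k * (k - 1) * σ x ^ (k - 2) * ‖fderiv ℝ σ x‖ ^ 2 := by
    have : 0 ≤ k - 1 := by linarith
    positivity
  have hmain : -(k * σ x ^ (k - 1) * C) ≤ k * σ x ^ (k - 1) * lap σ x := by
    rw [← mul_neg]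
    gcongr
  rw [lap_const_mul t (hσ.rpow_const_of_ne hx.ne'), lap_rpow hσ hx]
  calc -(t * (k * σ x ^ (k - 1) * lap σ x + k * (k - 1) * σ x ^ (k - 2) * ‖fderiv ℝ σ x‖ ^ 2))
      ≤ t * (k * σ x ^ (k - 1) * C) := by
        rw [← mul_neg]
        gcongr
        linarith
    _ = t ^ p * σ x ^ (k - 1) := by rw [← ht]; ring
    _ = (t * σ x ^ k) ^ p := by
        rw [Real.mul_rpow (by positivity) (by positivity), ← Real.rpow_mul hx.le, hkp]

theorem exists_mul_rpow_le_of_neg_le_lap (hp₀ : 0 ≤ p) (hp₁ : p < 1) {C : ℝ} (hC : 0 < C) :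
    ∃ t > 0, ∀ (D : Set (Eucl n)) (φ σ : Eucl n → ℝ), Bornology.IsBounded D → IsPosSolution D p φ →
      ContinuousOn σ (closure D) → (∀ x ∈ D, ContDiffAt ℝ 2 σ x ∧ -C ≤ lap σ x) →
      (∀ x ∈ frontier D, σ x < 0) → ∀ x ∈ D, 0 ≤ σ x → t * σ x ^ (1 / (1 - p)) ≤ φ x := by
  obtain ⟨t, ht, hsub⟩ := exists_neg_lap_mul_rpow_le (n := n) hp₀ hp₁ hC
  refine ⟨t, ht, fun D φ σ hD hφ hσ hlap hfr x hxD hx => ?_⟩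
  have hk : 0 < 1 / (1 - p) := one_div_pos.2 (sub_pos.2 hp₁)
  set E := closure D ∩ σ ⁻¹' Ici 0
  have hE : IsCompact E := hD.isCompact_closure.of_isClosed_subset
    (hσ.preimage_isClosed_of_isClosed isClosed_closure isClosed_Ici) inter_subset_left
  have hED : E ⊆ D := fun y hy => by_contra fun hyD =>
    (hfr y (hφ.isOpen.frontier_eq ▸ ⟨hy.1, hyD⟩)).not_ge hy.2
  refine le_of_sublinear (u := fun y => t * σ y ^ (1 / (1 - p))) hp₁ hE
    (continuousOn_const.mul ((hσ.mono inter_subset_left).rpow_const fun _ _ => .inr hk.le))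
    hφ.continuous.continuousOn (fun y hy => hφ.pos y (hED hy)) (fun y hy hlt => ?_) x
    ⟨subset_closure hxD, hx⟩
  obtain ⟨hσy, hlapy⟩ := hlap y (hED hy)
  have hpos : 0 < σ y := lt_of_le_of_ne hy.2 fun h => by
    rw [← h, Real.zero_rpow hk.ne', mul_zero] at hlt
    exact hlt.not_ge (hφ.nonneg y)
  refine ⟨?_, contDiffAt_const.mul (hσy.rpow_const_of_ne hpos.ne'), hφ.contDiffAt y (hED hy),
    hsub σ y hσy hpos hlapy, by rw [hφ.lap_eq y (hED hy), neg_neg]⟩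
  filter_upwards [hφ.isOpen.mem_nhds (hED hy), hσy.continuousAt.eventually_const_le hpos]
    with z hzD hz using ⟨subset_closure hzD, hz⟩

lemma IsDefiningFunction.exists_lt_mul_holeBarrier (hρ : IsDefiningFunction Ω ρ) (hn : 3 ≤ n)
    (hΩ : Bornology.IsBounded Ω) :
    ∃ Λ > 0, ∀ ε > 0, ∀ x ∈ closure (Ω \ holes n ε (aStar n ε)),
      x ∉ Ω \ holes n ε (aStar n ε) → ρ x < Λ * holeBarrier n ε x := by
  obtain ⟨M, hM, hρM⟩ := exists_pos_forall_abs_le hΩ.isCompact_closure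
    hρ.contDiff.continuous.continuousOn
  set c : ℝ := (Real.pi ^ 2) ^ (-(((n : ℝ) - 2) / 2))
  have hc : 0 < c := by positivity
  refine ⟨2 * M / c, by positivity, fun ε hε x hx hxD => ?_⟩
  have hS : 0 < latticeSinSum n ε x := latticeSinSum_pos_of_mem_closure hε hx
  by_cases hxΩ : x ∈ Ω
  · have hG := le_holeBarrier_of_mem_holes hn hε hS (not_not.1 fun h => hxD ⟨hxΩ, h⟩)
    calc ρ x ≤ M := (le_abs_self _).trans (hρM x (subset_closure hxΩ))
      _ < 2 * M / c * c := by rw [div_mul_cancel₀ _ hc.ne']; linarith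
      _ ≤ 2 * M / c * holeBarrier n ε x := by gcongr
  · have hG := holeBarrier_pos hε.ne' hS
    exact (not_lt.1 fun h => hxΩ ((hρ.mem_iff x).2 h)).trans_lt (by positivity)

lemma IsDefiningFunction.exists_neg_le_lap_sub (hρ : IsDefiningFunction Ω ρ) (hn : 3 ≤ n)
    (hΩ : Bornology.IsBounded Ω) {Λ : ℝ} (hΛ : 0 < Λ) :
    ∃ C > 0, ∀ ε ≠ 0, ∀ x ∈ Ω, 0 < latticeSinSum n ε x →
      -C ≤ lap (fun y => ρ y - Λ * holeBarrier n ε y) x := by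
  obtain ⟨C₁, hC₁, hlapρ⟩ := hρ.exists_abs_lap_le hΩ
  obtain ⟨C₂, hC₂, hlapG⟩ := exists_lap_holeBarrier_le hn
  refine ⟨C₁ + Λ * C₂, by positivity, fun ε hε x hx hS => ?_⟩
  have hG : ContDiffAt ℝ 2 (holeBarrier n ε) x := contDiffAt_holeBarrier hS
  rw [lap_sub hρ.contDiff.contDiffAt (contDiffAt_const.mul hG), lap_const_mul Λ hG]
  have hlapGx : lap (holeBarrier n ε) x ≤ C₂ := (hlapG ε hε x hS).trans
    (sub_le_self _ (div_nonneg (holeBarrier_pos hε hS).le (sq_nonneg ε)))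
  linarith [neg_le_of_abs_le (hlapρ x (subset_closure hx)),
    mul_le_mul_of_nonneg_left hlapGx hΛ.le]

theorem IsDefiningFunction.exists_mul_rpow_le_isPosSolution (hρ : IsDefiningFunction Ω ρ)
    (hn : 3 ≤ n) (hΩ : Bornology.IsBounded Ω) (hp₀ : 0 ≤ p) (hp₁ : p < 1) :
    ∃ t > 0, ∃ θ > 0, ∀ ε > 0, ∀ φ, IsPosSolution (Ω \ holes n ε (aStar n ε)) p φ →
      ∀ x ∈ Ω \ holes n ε (aStar n ε), holeBarrier n ε x ≤ θ * ρ x →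
        t * ρ x ^ (1 / (1 - p)) ≤ φ x := by
  obtain ⟨Λ, hΛ, hbdry⟩ := hρ.exists_lt_mul_holeBarrier hn hΩ
  obtain ⟨C, hC, hlap⟩ := hρ.exists_neg_le_lap_sub hn hΩ hΛ
  obtain ⟨t, ht, hlow⟩ := exists_mul_rpow_le_of_neg_le_lap (n := n) hp₀ hp₁ hC
  refine ⟨t * 2⁻¹ ^ (1 / (1 - p)), by positivity, 1 / (2 * Λ), by positivity,
    fun ε hε φ hφ x hxD hx => ?_⟩
  set σ : Eucl n → ℝ := fun y => ρ y - Λ * holeBarrier n ε y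
  have hσC : ∀ y ∈ closure (Ω \ holes n ε (aStar n ε)), ContDiffAt ℝ 2 σ y := fun y hy =>
    hρ.contDiff.contDiffAt.sub
      (contDiffAt_const.mul (contDiffAt_holeBarrier (latticeSinSum_pos_of_mem_closure hε hy)))
  have hρx : 0 < ρ x := (hρ.mem_iff x).1 hxD.1
  have hσx : 2⁻¹ * ρ x ≤ σ x := by
    have : Λ * (1 / (2 * Λ) * ρ x) = 2⁻¹ * ρ x := by field_simp
    simp only [σ]
    linarith [mul_le_mul_of_nonneg_left hx hΛ.le]
  calc t * 2⁻¹ ^ (1 / (1 - p)) * ρ x ^ (1 / (1 - p)) = t * (2⁻¹ * ρ x) ^ (1 / (1 - p)) := by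
        rw [Real.mul_rpow (by norm_num) hρx.le, mul_assoc]
    _ ≤ t * σ x ^ (1 / (1 - p)) := by gcongr
    _ ≤ φ x := hlow _ φ σ (hΩ.subset sdiff_subset) hφ
        (fun y hy => (hσC y hy).continuousAt.continuousWithinAt)
        (fun y hy => ⟨hσC y (subset_closure hy), hlap ε hε.ne' y hy.1
          (latticeSinSum_pos_of_mem_closure hε (subset_closure hy))⟩)
        (fun y hy => by
          rw [hφ.isOpen.frontier_eq] at hy
          exact sub_neg.2 (hbdry ε hε y hy.1 hy.2)) x hxD (by linarith)

end UniformBounds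

/-! ### Supersolutions close to a given solution -/

section Scalar

variable {p a t : ℝ}

lemma rpow_add_le_of_mul_rpow_le {y h l K δ : ℝ} (hp₀ : 0 ≤ p) (hp₁ : p ≤ 1) (hy : 0 < y)
    (hh : 0 ≤ h) (hK : 0 ≤ K) (hδ : 0 ≤ δ) (hle : p * (y ^ (p - 1) * h) ≤ (1 - p) * K * y ^ p + l) :
    ((1 + K * δ) * y + δ * h) ^ p ≤ (1 + K * δ) * y ^ p + δ * l := by
  set r := δ * (K + h / y)
  have hr : 0 ≤ r := by positivity
  calc ((1 + K * δ) * y + δ * h) ^ p = (1 + r) ^ p * y ^ p := by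
        rw [← Real.mul_rpow (by positivity) hy.le]
        congr 1
        simp only [r]
        field_simp
        ring
    _ ≤ (1 + p * r) * y ^ p := by
        gcongr
        exact rpow_one_add_le_one_add_mul_self (by linarith) hp₀ hp₁
    _ = y ^ p + δ * (p * K * y ^ p + p * (y ^ (p - 1) * h)) := by
        rw [Real.rpow_sub_one hy.ne']
        simp only [r]
        ring
    _ ≤ y ^ p + δ * (p * K * y ^ p + ((1 - p) * K * y ^ p + l)) := by gcongr
    _ = (1 + K * δ) * y ^ p + δ * l := by ring

lemma rpow_add_le_of_rpow_mul_le {y h l K δ : ℝ} (hp₀ : 0 ≤ p) (hp₁ : p ≤ 1) (hy : 0 ≤ y)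
    (hh : 1 ≤ h) (hK : 0 ≤ K) (hδ : 0 < δ) (hle : δ ^ (p - 1) * h ≤ l) :
    ((1 + K * δ) * y + δ * h) ^ p ≤ (1 + K * δ) * y ^ p + δ * l := by
  have hKδ : 1 ≤ 1 + K * δ := le_add_of_nonneg_right (by positivity)
  calc ((1 + K * δ) * y + δ * h) ^ p ≤ ((1 + K * δ) * y) ^ p + (δ * h) ^ p :=
        Real.rpow_add_le_add_rpow (by positivity) (by positivity) hp₀ hp₁
    _ = (1 + K * δ) ^ p * y ^ p + δ ^ p * h ^ p := by
        rw [Real.mul_rpow (by positivity) hy, Real.mul_rpow hδ.le (by positivity)]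
    _ ≤ (1 + K * δ) * y ^ p + δ ^ p * h := by
        gcongr
        · exact Real.rpow_le_self_of_one_le hKδ hp₁
        · exact Real.rpow_le_self_of_one_le hh hp₁
    _ = (1 + K * δ) * y ^ p + δ * (δ ^ (p - 1) * h) := by
        rw [Real.rpow_sub_one hδ.ne']
        field_simp
    _ ≤ (1 + K * δ) * y ^ p + δ * l := by gcongr

lemma exists_mul_rpow_sub_one_le (hp₀ : 0 ≤ p) (hp₁ : p < 1) (ha : 0 < a) (ht : 0 < t) {A B : ℝ}
    (hA : 0 < A) (hB : 0 < B) :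
    ∃ K > 0, ∀ r > 0, ∀ y, t * r ^ (1 / (1 - p)) ≤ y →
      A * y ^ (p - 1) ≤ (1 - p) * K * y ^ p + (a * r ^ (-(3 / 2) : ℝ) - B) := by
  have hp : 0 < 1 - p := sub_pos.2 hp₁
  set k := 1 / (1 - p)
  have hkp : 0 ≤ k * p := by positivity
  obtain ⟨C₁, hC₁, h₁⟩ := exists_forall_mul_rpow_le_add (α := -(3 / 2)) (β := -1) (γ := k * p)
    (A := A * t ^ (p - 1)) (c := a / 2) (by norm_num) (by linarith) (by positivity) (by positivity)
  obtain ⟨C₂, hC₂, h₂⟩ := exists_forall_mul_rpow_le_add (α := -(3 / 2)) (β := 0) (γ := k * p)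
    (c := a / 2) (by norm_num) hkp hB (by positivity)
  refine ⟨(C₁ + C₂) / ((1 - p) * t ^ p), by positivity, fun r hr y hy => ?_⟩
  have hkp' : k * (p - 1) = -1 := by simp only [k]; field_simp; ring
  have hB' := h₂ r hr
  rw [Real.rpow_zero, mul_one] at hB'
  have hlow : (C₁ + C₂) * r ^ (k * p) ≤ (1 - p) * ((C₁ + C₂) / ((1 - p) * t ^ p)) * y ^ p := by
    calc (C₁ + C₂) * r ^ (k * p)
        = (1 - p) * ((C₁ + C₂) / ((1 - p) * t ^ p)) * (t * r ^ k) ^ p := by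
          rw [Real.mul_rpow ht.le (by positivity), ← Real.rpow_mul hr.le]
          field_simp
      _ ≤ _ := by gcongr
  calc A * y ^ (p - 1) ≤ A * (t * r ^ k) ^ (p - 1) := by
        gcongr A * ?_
        exact Real.rpow_le_rpow_of_nonpos (by positivity) hy (by linarith)
    _ = A * t ^ (p - 1) * r ^ (-1 : ℝ) := by
        rw [Real.mul_rpow ht.le (by positivity), ← Real.rpow_mul hr.le, hkp', mul_assoc]
    _ ≤ a / 2 * r ^ (-(3 / 2) : ℝ) + C₁ * r ^ (k * p) := h₁ r hr
    _ ≤ _ := by linarith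

lemma inv_le_rpow_add_div_sq {ε r : ℝ} (hε : ε ∈ Ioo (0 : ℝ) 1) (hr : 0 < r) :
    ε⁻¹ ≤ r ^ (-(3 / 2) : ℝ) + r / ε ^ 2 := by
  have hε₀ := hε.1
  obtain hle | hlt := le_or_gt r ε
  · calc ε⁻¹ = ε ^ (-1 : ℝ) := (Real.rpow_neg_one ε).symm
      _ ≤ r ^ (-1 : ℝ) := Real.rpow_le_rpow_of_nonpos hr hle (by norm_num)
      _ ≤ r ^ (-(3 / 2) : ℝ) :=
        Real.rpow_le_rpow_of_exponent_ge hr (hle.trans hε.2.le) (by norm_num)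
      _ ≤ _ := le_add_of_nonneg_right (by positivity)
  · calc ε⁻¹ = ε / ε ^ 2 := by field_simp
      _ ≤ r / ε ^ 2 := by gcongr
      _ ≤ _ := le_add_of_nonneg_left (by positivity)

lemma exists_mul_rpow_sub_one_le_of_mul_le {θ A B : ℝ} (hp₀ : 0 < p) (hp₁ : p ≤ 1) (ha : 0 < a)
    (hθ : 0 < θ) (hB : 0 ≤ B) :
    ∃ ε₀ ∈ Ioo (0 : ℝ) 1, ∀ ε ∈ Ioo 0 ε₀, ∀ r > 0, ∀ g, θ * r ≤ g →
      A * ε ^ (p - 1) ≤ a * r ^ (-(3 / 2) : ℝ) + g / ε ^ 2 - B := by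
  obtain ⟨ε₀, hε₀, hsmall⟩ := exists_forall_mul_rpow_le (α := -1) (β := p - 1) (by linarith)
    (A + B) (lt_min ha hθ)
  refine ⟨ε₀, hε₀, fun ε hε r hr g hg => ?_⟩
  have hε₁ : ε ∈ Ioo (0 : ℝ) 1 := ⟨hε.1, hε.2.trans hε₀.2⟩
  have hB' : B ≤ B * ε ^ (p - 1) := le_mul_of_one_le_right hB
    (Real.one_le_rpow_of_pos_of_le_one_of_nonpos hε.1 hε₁.2.le (by linarith))
  have hmain : (A + B) * ε ^ (p - 1) ≤ a * r ^ (-(3 / 2) : ℝ) + g / ε ^ 2 := by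
    calc (A + B) * ε ^ (p - 1) ≤ min a θ * ε⁻¹ := by
          rw [← Real.rpow_neg_one]
          exact hsmall ε ⟨hε.1, hε.2.le⟩
      _ ≤ min a θ * (r ^ (-(3 / 2) : ℝ) + r / ε ^ 2) := by
          gcongr
          exact inv_le_rpow_add_div_sq hε₁ hr
      _ ≤ a * r ^ (-(3 / 2) : ℝ) + θ * r / ε ^ 2 := by
          rw [mul_add, mul_div_assoc θ]
          gcongr
          exacts [min_le_left a θ, min_le_right a θ]
      _ ≤ _ := by gcongr
  linarith

end Scalar

section Barrier

variable {n : ℕ} {Ω : Set (Eucl n)} {p ε : ℝ} {ρ : Eucl n → ℝ} {x : Eucl n}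

/-- The barrier `1 + ρ ^ (1 / 2) + holeBarrier` of the perforated domain: bounded, at least one,
and strictly superharmonic near the boundary and near the holes. -/
def perforatedBarrier (ρ : Eucl n → ℝ) (ε : ℝ) (x : Eucl n) : ℝ :=
  1 + ρ x ^ (1 / 2 : ℝ) + holeBarrier n ε x

lemma one_le_perforatedBarrier (hε : ε ≠ 0) (hρ : 0 ≤ ρ x) (hS : 0 < latticeSinSum n ε x) :
    1 ≤ perforatedBarrier ρ ε x := by
  have := holeBarrier_pos hε hS
  have := Real.rpow_nonneg hρ (1 / 2)
  unfold perforatedBarrier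
  linarith

namespace IsDefiningFunction

lemma contDiffAt_perforatedBarrier (hρ : IsDefiningFunction Ω ρ) (hx : x ∈ Ω)
    (hS : 0 < latticeSinSum n ε x) : ContDiffAt ℝ 2 (perforatedBarrier ρ ε) x :=
  (contDiffAt_const.add (hρ.contDiff.contDiffAt.rpow_const_of_ne ((hρ.mem_iff x).1 hx).ne')).add
    (contDiffAt_holeBarrier hS)

lemma continuousAt_perforatedBarrier (hρ : IsDefiningFunction Ω ρ)
    (hS : 0 < latticeSinSum n ε x) : ContinuousAt (perforatedBarrier ρ ε) x :=
  (continuousAt_const.add (hρ.contDiff.continuous.continuousAt.rpow_const (.inr (by norm_num)))).add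
    (contDiffAt_holeBarrier hS).continuousAt

lemma exists_perforatedBarrier_le (hρ : IsDefiningFunction Ω ρ) (hn : 3 ≤ n)
    (hΩ : Bornology.IsBounded Ω) :
    ∃ H > 0, ∀ ε ∈ Ioo (0 : ℝ) 1, ∀ x ∈ closure (Ω \ holes n ε (aStar n ε)),
      perforatedBarrier ρ ε x ≤ H := by
  obtain ⟨M, hM, hρM⟩ := exists_pos_forall_abs_le hΩ.isCompact_closure
    hρ.contDiff.continuous.continuousOn
  refine ⟨1 + M ^ (1 / 2 : ℝ) + 2, by positivity, fun ε hε x hx => ?_⟩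
  have hxΩ : x ∈ closure Ω := closure_mono sdiff_subset hx
  unfold perforatedBarrier
  gcongr
  · exact hρ.nonneg hxΩ
  · exact (le_abs_self _).trans (hρM x hxΩ)
  · exact holeBarrier_le_two hn hε
      (le_latticeSinSum_of_mem_closure hε.1.ne' (aStar_pos n hε.1).le hx)

lemma exists_lap_perforatedBarrier_le (hρ : IsDefiningFunction Ω ρ) (hn : 3 ≤ n)
    (hΩ : Bornology.IsBounded Ω) :
    ∃ a > 0, ∃ B > 0, ∀ ε ≠ 0, ∀ x ∈ Ω, 0 < latticeSinSum n ε x →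
      lap (perforatedBarrier ρ ε) x ≤
        B - a * ρ x ^ (-(3 / 2) : ℝ) - holeBarrier n ε x / ε ^ 2 := by
  obtain ⟨a, ha, B, hB, hlapρ⟩ := hρ.exists_lap_rpow_half_le hΩ
  obtain ⟨C, hC, hlapG⟩ := exists_lap_holeBarrier_le hn
  refine ⟨a, ha, B + C, by positivity, fun ε hε x hx hS => ?_⟩
  have hρC : ContDiffAt ℝ 2 (fun y => ρ y ^ (1 / 2 : ℝ)) x :=
    hρ.contDiff.contDiffAt.rpow_const_of_ne ((hρ.mem_iff x).1 hx).ne'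
  unfold perforatedBarrier
  rw [lap_add (contDiffAt_const.add hρC) (contDiffAt_holeBarrier hS),
    lap_add contDiffAt_const hρC, lap_const]
  linarith [hlapρ x hx, hlapG ε hε x hS]

theorem exists_rpow_le_neg_lap (hρ : IsDefiningFunction Ω ρ) (hn : 3 ≤ n)
    (hΩ : Bornology.IsBounded Ω) (hp₀ : 0 < p) (hp₁ : p < 1) :
    ∃ K > 0, ∃ ε₀ ∈ Ioo (0 : ℝ) 1, ∀ ε ∈ Ioo 0 ε₀, ∀ φ,
      IsPosSolution (Ω \ holes n ε (aStar n ε)) p φ →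
      ∀ x ∈ Ω \ holes n ε (aStar n ε), ∀ δ ≥ ε,
        ((1 + K * δ) * φ x + δ * perforatedBarrier ρ ε x) ^ p ≤
          -lap (fun y => (1 + K * δ) * φ y + δ * perforatedBarrier ρ ε y) x := by
  obtain ⟨H, hH, hbdd⟩ := hρ.exists_perforatedBarrier_le hn hΩ
  obtain ⟨a, ha, B, hB, hlap⟩ := hρ.exists_lap_perforatedBarrier_le hn hΩ
  obtain ⟨t, ht, θ, hθ, hlow⟩ := hρ.exists_mul_rpow_le_isPosSolution hn hΩ hp₀.le hp₁
  obtain ⟨K, hK, hfar⟩ := exists_mul_rpow_sub_one_le hp₀.le hp₁ ha ht hH hB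
  obtain ⟨ε₀, hε₀, hnear⟩ :=
    exists_mul_rpow_sub_one_le_of_mul_le (A := H) hp₀ hp₁.le ha hθ hB.le
  refine ⟨K, hK, ε₀, hε₀, fun ε hε φ hφ x hx δ hδ => ?_⟩
  have hxD := subset_closure hx
  have hS := latticeSinSum_pos_of_mem_closure hε.1 hxD
  have hρx := (hρ.mem_iff x).1 hx.1
  have hh₁ := one_le_perforatedBarrier hε.1.ne' hρx.le hS
  have hhH := hbdd ε ⟨hε.1, hε.2.trans hε₀.2⟩ x hxD
  have hlapx := hlap ε hε.1.ne' x hx.1 hS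
  have hδ₀ : 0 < δ := hε.1.trans_le hδ
  rw [lap_const_mul_add_const_mul _ δ (hφ.contDiffAt x hx)
    (hρ.contDiffAt_perforatedBarrier hx.1 hS), hφ.lap_eq x hx]
  suffices ((1 + K * δ) * φ x + δ * perforatedBarrier ρ ε x) ^ p ≤
      (1 + K * δ) * φ x ^ p + δ * -lap (perforatedBarrier ρ ε) x by linarith
  obtain hfarx | hnearx := le_total (holeBarrier n ε x) (θ * ρ x)
  · have hG : 0 ≤ holeBarrier n ε x / ε ^ 2 :=
      div_nonneg (holeBarrier_pos hε.1.ne' hS).le (sq_nonneg ε)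
    have hφx := hφ.pos x hx
    refine rpow_add_le_of_mul_rpow_le hp₀.le hp₁.le hφx (by linarith) hK.le hδ₀.le ?_
    calc p * (φ x ^ (p - 1) * perforatedBarrier ρ ε x)
        ≤ φ x ^ (p - 1) * H := by
          refine (mul_le_of_le_one_left (by positivity) hp₁.le).trans ?_
          gcongr
      _ ≤ _ := by linarith [hfar (ρ x) hρx (φ x) (hlow ε hε.1 φ hφ x hx hfarx)]
  · refine rpow_add_le_of_rpow_mul_le hp₀.le hp₁.le (hφ.nonneg x) hh₁ hK.le hδ₀ ?_
    calc δ ^ (p - 1) * perforatedBarrier ρ ε x ≤ ε ^ (p - 1) * H := by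
          have hrpow := Real.rpow_le_rpow_of_nonpos hε.1 hδ (by linarith : p - 1 ≤ 0)
          exact mul_le_mul hrpow hhH (by linarith) (Real.rpow_nonneg hε.1.le _)
      _ ≤ _ := by linarith [hnear ε hε (ρ x) hρx (holeBarrier n ε x) hnearx]

end IsDefiningFunction

end Barrier

/-! ### Translates of a solution -/

section Translates

variable {n : ℕ} {Ω : Set (Eucl n)} {p : ℝ} {ρ : Eucl n → ℝ}

namespace IsDefiningFunction

lemma exists_translate_le_mul (hρ : IsDefiningFunction Ω ρ) (hn : n ≠ 0)
    (hΩ : Bornology.IsBounded Ω) (hp₀ : 0 ≤ p) (hp₁ : p < 1) :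
    ∃ C ≥ 1, ∀ ε ∈ Ioo (0 : ℝ) 1, ∀ a φ, IsPosSolution (Ω \ holes n ε a) p φ →
      ∀ v, UnitLatticeDir n v → ∀ x ∉ Ω \ holes n ε a, φ (x + ε • v) ≤ C * ε := by
  obtain ⟨A, hA, hφρ⟩ := hρ.exists_isPosSolution_le_mul hn hΩ hp₀ hp₁
  obtain ⟨L, hL, hρL⟩ := hρ.exists_le_mul_dist hΩ
  refine ⟨A * L + 1, le_add_of_nonneg_left (by positivity), fun ε hε a φ hφ v hv x hx => ?_⟩
  have hε₀ := hε.1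
  by_cases hy : x + ε • v ∈ Ω \ holes n ε a
  · have hxΩ : x ∉ Ω := fun h => hx ⟨h, fun hxT => hy.2 (add_smul_mem_holes hv.1 hxT)⟩
    have hd : dist x (x + ε • v) = ε := by simp [norm_smul, hv.2, abs_of_pos hε₀]
    have hρy := hρL _ hy.1 x hxΩ (hd.trans_le hε.2.le)
    rw [hd] at hρy
    calc φ (x + ε • v) ≤ A * ρ (x + ε • v) := hφρ _ sdiff_subset φ hφ _ hy.1
      _ ≤ A * (L * ε) := by gcongr
      _ ≤ (A * L + 1) * ε := by linarith
  · rw [hφ.eq_zero _ hy]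
    positivity

lemma exists_translate_le (hρ : IsDefiningFunction Ω ρ) (hn : 3 ≤ n)
    (hΩ : Bornology.IsBounded Ω) (hp₀ : 0 < p) (hp₁ : p < 1) :
    ∃ K > 0, ∃ C > 0, ∃ ε₀ ∈ Ioo (0 : ℝ) 1, ∀ ε ∈ Ioo 0 ε₀, ∀ φ,
      IsPosSolution (Ω \ holes n ε (aStar n ε)) p φ → ∀ v, UnitLatticeDir n v →
      ∀ x ∈ closure (Ω \ holes n ε (aStar n ε)),
        φ (x + ε • v) ≤ (1 + K * (C * ε)) * φ x + C * ε * perforatedBarrier ρ ε x := by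
  obtain ⟨K, hK, ε₀, hε₀, hsuper⟩ := hρ.exists_rpow_le_neg_lap hn hΩ hp₀ hp₁
  obtain ⟨C, hC, hout⟩ := hρ.exists_translate_le_mul (by omega) hΩ hp₀.le hp₁
  refine ⟨K, hK, C, by linarith, ε₀, hε₀, fun ε hε φ hφ v hv => ?_⟩
  set D := Ω \ holes n ε (aStar n ε)
  have hδε : C * ε ≥ ε := le_mul_of_one_le_left hε.1.le hC
  set δ := C * ε
  have hδ₀ : 0 < δ := hε.1.trans_le hδε
  set ψ : Eucl n → ℝ := fun y => (1 + K * δ) * φ y + δ * perforatedBarrier ρ ε y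
  have hδψ : ∀ y ∈ closure D, δ ≤ ψ y := fun y hy => by
    have hh := one_le_perforatedBarrier hε.1.ne' (hρ.nonneg (closure_mono sdiff_subset hy))
      (latticeSinSum_pos_of_mem_closure hε.1 hy)
    have : 0 ≤ (1 + K * δ) * φ y := mul_nonneg (by positivity) (hφ.nonneg y)
    exact (le_mul_of_one_le_right hδ₀.le hh).trans (le_add_of_nonneg_left this)
  refine le_of_sublinear (u := fun y => φ (y + ε • v)) hp₁
    (hΩ.subset sdiff_subset).isCompact_closure
    (hφ.continuous.comp (continuous_add_const _)).continuousOn (fun y hy => ?_)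
    (fun y hy => hδ₀.trans_le (hδψ y hy)) fun y hy hlt => ?_
  · exact ((continuousAt_const.mul hφ.continuous.continuousAt).add (continuousAt_const.mul
      (hρ.continuousAt_perforatedBarrier
        (latticeSinSum_pos_of_mem_closure hε.1 hy)))).continuousWithinAt
  have hyv : y + ε • v ∈ D := hφ.mem_of_pos ((hδ₀.trans_le (hδψ y hy)).trans hlt)
  have hyD : y ∈ D := by_contra fun h =>
    ((hout ε ⟨hε.1, hε.2.trans hε₀.2⟩ _ φ hφ v hv y h).trans (hδψ y hy)).not_gt hlt
  refine ⟨mem_of_superset (hφ.isOpen.mem_nhds hyD) subset_closure,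
    (hφ.contDiffAt _ hyv).comp y (contDiffAt_id.add contDiffAt_const),
    (contDiffAt_const.mul (hφ.contDiffAt y hyD)).add (contDiffAt_const.mul
      (hρ.contDiffAt_perforatedBarrier hyD.1 (latticeSinSum_pos_of_mem_closure hε.1 hy))),
    ?_, hsuper ε hε φ hφ y hyD δ hδε⟩
  rw [lap_comp_add_right, hφ.lap_eq _ hyv, neg_neg]

theorem exists_translate_sub_le (hρ : IsDefiningFunction Ω ρ) (hn : 3 ≤ n)
    (hΩ : Bornology.IsBounded Ω) (hp₀ : 0 < p) (hp₁ : p < 1) :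
    ∃ C > 0, ∀ ε ∈ Ioo (0 : ℝ) 1, ∀ φ, IsPosSolution (Ω \ holes n ε (aStar n ε)) p φ →
      ∀ v, UnitLatticeDir n v → ∀ x, φ (x + ε • v) - φ x ≤ C * ε := by
  obtain ⟨M, hM, hφM⟩ := exists_isPosSolution_le (by omega) hΩ hp₀.le hp₁
  obtain ⟨H, hH, hbdd⟩ := hρ.exists_perforatedBarrier_le hn hΩ
  obtain ⟨C₁, hC₁, hout⟩ := hρ.exists_translate_le_mul (by omega) hΩ hp₀.le hp₁
  obtain ⟨K, hK, C₂, hC₂, ε₀, hε₀, hin⟩ := hρ.exists_translate_le hn hΩ hp₀ hp₁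
  have hε₀' := hε₀.1
  refine ⟨C₁ + (K * M + H) * C₂ + M / ε₀, by positivity, fun ε hε φ hφ v hv x => ?_⟩
  have hε' := hε.1
  have hM' := hφM _ sdiff_subset φ hφ
  suffices φ (x + ε • v) - φ x ≤ C₁ * ε ∨
      φ (x + ε • v) - φ x ≤ (K * M + H) * C₂ * ε ∨ φ (x + ε • v) - φ x ≤ M / ε₀ * ε by
    have h₁ : 0 ≤ C₁ * ε := by positivity
    have h₂ : 0 ≤ (K * M + H) * C₂ * ε := by positivity
    have h₃ : 0 ≤ M / ε₀ * ε := by positivity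
    rcases this with h | h | h <;> linarith
  by_cases hx : x ∈ Ω \ holes n ε (aStar n ε)
  · right
    obtain hlt | hge := lt_or_ge ε ε₀
    · left
      have hxD := subset_closure hx
      have hKM : K * (C₂ * ε) * φ x ≤ K * (C₂ * ε) * M := by gcongr; exact hM' x
      have hHb : C₂ * ε * perforatedBarrier ρ ε x ≤ C₂ * ε * H := by gcongr; exact hbdd ε hε x hxD
      linarith [hin ε ⟨hε', hlt⟩ φ hφ v hv x hxD]
    · right
      calc φ (x + ε • v) - φ x ≤ M := (sub_le_self _ (hφ.nonneg x)).trans (hM' _)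
        _ = M / ε₀ * ε₀ := (div_mul_cancel₀ M hε₀'.ne').symm
        _ ≤ M / ε₀ * ε := by gcongr
  · exact .inl ((sub_le_self _ (hφ.nonneg x)).trans (hout ε hε _ φ hφ v hv x hx))

end IsDefiningFunction

lemma unitLatticeDir_single (i : Fin n) {s : ℤ} (hs : |s| = 1) :
    UnitLatticeDir n (EuclideanSpace.single i (s : ℝ)) := by
  refine ⟨fun j => ⟨if j = i then s else 0, by simp⟩, ?_⟩
  rw [PiLp.norm_single, Real.norm_eq_abs]
  exact_mod_cast hs

lemma abs_dquot_single_le {ε C : ℝ} {f : Eucl n → ℝ} (hε : 0 < ε)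
    (h : ∀ v, UnitLatticeDir n v → ∀ x, f (x + ε • v) - f x ≤ C * ε) (i : Fin n) (x : Eucl n) :
    |dquot ε (EuclideanSpace.single i 1) f x| ≤ C := by
  have hfwd := h _ (unitLatticeDir_single i (s := 1) rfl) x
  have hbwd := h _ (unitLatticeDir_single i (s := -1) rfl) (x + ε • EuclideanSpace.single i 1)
  have hback : x + ε • (EuclideanSpace.single i 1 : Eucl n) +
      ε • EuclideanSpace.single i ((-1 : ℤ) : ℝ) = x := by
    ext j
    simp only [PiLp.add_apply, PiLp.smul_apply, PiLp.single_apply, smul_eq_mul, Int.cast_neg,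
      Int.cast_one]
    split_ifs <;> ring
  rw [hback] at hbwd
  rw [Int.cast_one] at hfwd
  rw [dquot, abs_div, abs_of_pos hε, div_le_iff₀ hε]
  exact abs_sub_le_iff.2 ⟨hfwd, hbwd⟩

lemma dgradNorm_sq_le {ε C : ℝ} {f : Eucl n → ℝ} {x : Eucl n}
    (h : ∀ i, |dquot ε (EuclideanSpace.single i 1) f x| ≤ C) :
    dgradNorm ε f x ^ 2 ≤ n * C ^ 2 := by
  rw [dgradNorm, Real.sq_sqrt (Finset.sum_nonneg fun i _ => sq_nonneg _)]
  calc ∑ i, dquot ε (EuclideanSpace.single i 1) f x ^ 2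
      ≤ ∑ _ : Fin n, C ^ 2 := Finset.sum_le_sum fun i _ => sq_le_sq.2 ((h i).trans (le_abs_self C))
    _ = n * C ^ 2 := by simp

end Translates

theorem ev_discrete_gradient_bound_general {n : ℕ} (hn : 3 ≤ n) {Ω : Set (Eucl n)}
    (hΩ : Bornology.IsBounded Ω) (hΩs : HasSmoothBoundary Ω) {p : ℝ} (hp₀ : 0 < p) (hp₁ : p < 1) :
    ∃ C > 0, ∀ ε ∈ Ioo (0 : ℝ) 1, ∀ φ, IsEVSol n Ω ε (aStar n ε) p φ →
      ∀ x, dgradNorm ε φ x ^ 2 ≤ C := by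
  obtain ⟨ρ, hρ⟩ := hΩs.exists_isDefiningFunction
  obtain ⟨C, hC, hφC⟩ := hρ.exists_translate_sub_le hn hΩ hp₀ hp₁
  refine ⟨n * C ^ 2, by positivity, fun ε hε φ hφ x => dgradNorm_sq_le fun i => ?_⟩
  have hφ' := hφ.isPosSolution hρ.isOpen hε.1.ne' (aStar_pos n hε.1).le
  exact abs_dquot_single_le hε.1 (fun v hv => hφC ε hε φ hφ' v hv) i x

/-- uniform bound of the discrete gradient of the eigenfunctions φ_ε on
all of Ω̄: ‖Δ^ε_e φ_ε(x)‖² ≤ C with C independent of ε. -/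
theorem ev_discrete_gradient_bound
    (n : ℕ) (hn : 3 ≤ n)
    (Ω : Set (Eucl n)) (hΩo : IsOpen Ω) (hΩb : Bornology.IsBounded Ω)
    (hΩc : IsConnected Ω) (hΩs : HasSmoothBoundary Ω)
    (p : ℝ) (hp0 : 0 < p) (hp1 : p < 1)
    (Φ : ℝ → Eucl n → ℝ)
    (hΦ : ∀ ε ∈ Ioo (0:ℝ) 1, IsEVSol n Ω ε (aStar n ε) p (Φ ε))
    :
    ∃ C > (0:ℝ), ∀ ε ∈ Ioo (0:ℝ) 1, ∀ x ∈ closure Ω,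
      dgradNorm ε (Φ ε) x ^ 2 ≤ C := by
  obtain ⟨C, hC, h⟩ := ev_discrete_gradient_bound_general hn hΩb hΩs hp0 hp1
  exact ⟨C, hC, fun ε hε x _ => h ε hε _ (hΦ ε hε) x⟩

end
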